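/- arXiv:2407.20217 — 2 statements merged into one kernel-verified Lean document; each statement's English description precedes it below -/
import Mathlib

section
/- (a) For k ≥ 1, a graph G ∈ G_{n,n+k} minimizes d_2 over G_{n,n+k} if and only if G is a balanced weak subdivision of some D ∈ D_k. (b) If G is an imbalanced weak subdivision of some D ∈ D_k, then choosing a pair of chains whose lengths differ by at least 2 and moving one edge from the longer to the shorter chain strictly decreases d_2. -/
open Classical Finset

noncomputable section

/-- A finite multigraph: edges carry two (possibly equal) endpoints. -/
structure Multigraph where
  V : Type
  E : Type
  [fintV : Fintype V]
  [fintE : Fintype E]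
  src : E → V
  tgt : E → V

attribute [instance] Multigraph.fintV Multigraph.fintE

namespace Multigraph

variable (G : Multigraph)

/-- Number of vertices. -/
def nV : ℕ := Fintype.card G.V

/-- Number of edges (with multiplicity). -/
def nE : ℕ := Fintype.card G.E

/-- One step along an edge belonging to the edge set `S`. -/
def stepOn (S : Finset G.E) (u v : G.V) : Prop :=
  ∃ e ∈ S, (G.src e = u ∧ G.tgt e = v) ∨ (G.src e = v ∧ G.tgt e = u)

/-- The spanning subgraph with edge set `S` is connected. -/
def ConnOn (S : Finset G.E) : Prop :=
  ∀ u v : G.V, Relation.ReflTransGen (G.stepOn S) u v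

/-- `G` is connected. -/
def Connected : Prop := G.ConnOn Finset.univ

/-- The edge set `F` disconnects `G` (i.e. is a disconnection). -/
def Disconnects (F : Finset G.E) : Prop := ¬ G.ConnOn (Finset.univ \ F)

/-- `d i G`: the number of `i`-disconnections of `G`. -/
def d (i : ℕ) : ℕ :=
  ((Finset.univ : Finset (Finset G.E)).filter fun F => F.card = i ∧ G.Disconnects F).card

/-- The all-terminal reliability `R(G,p)`: each edge is independently retained with
probability `p`; this is the probability that the retained spanning subgraph is connected. -/
def rel (p : ℝ) : ℝ :=
  ∑ S : Finset G.E, if G.ConnOn S then p ^ S.card * (1 - p) ^ (G.nE - S.card) else 0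

/-- `e` is a bridge. -/
def IsBridge (e : G.E) : Prop := G.Disconnects {e}

def Bridgeless : Prop := ∀ e : G.E, ¬ G.IsBridge e

/-- The number of spanning trees of `G` (connected spanning subgraphs with `nV - 1` edges). -/
def treeCount : ℕ :=
  ((Finset.univ : Finset (Finset G.E)).filter fun S => S.card + 1 = G.nV ∧ G.ConnOn S).card

/-- The edge-connectivity: the least size of a disconnecting set of edges. -/
def edgeConnectivity : ℕ :=
  sInf {i : ℕ | ∃ F : Finset G.E, F.card = i ∧ G.Disconnects F}

/-- Degree of a vertex (a loop counts twice). -/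
def deg (v : G.V) : ℕ :=
  (Finset.univ.filter fun e => G.src e = v).card +
    (Finset.univ.filter fun e => G.tgt e = v).card

/-- The edges crossing the vertex set `A`. -/
def cutEdges (A : Finset G.V) : Finset G.E :=
  Finset.univ.filter fun e =>
    (G.src e ∈ A ∧ G.tgt e ∉ A) ∨ (G.src e ∉ A ∧ G.tgt e ∈ A)

/-- `F` is a cut: the set of edges crossing a nontrivial bipartition of the vertices. -/
def IsCut (F : Finset G.E) : Prop :=
  ∃ A : Finset G.V, A.Nonempty ∧ A ≠ Finset.univ ∧ F = G.cutEdges A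

/-- `F` is a bond: a minimal cut. -/
def IsBond (F : Finset G.E) : Prop :=
  G.IsCut F ∧ ∀ F' ⊆ F, G.IsCut F' → F' = F

/-- Number of `s`-bonds of `G`. -/
def bondCount (s : ℕ) : ℕ :=
  ((Finset.univ : Finset (Finset G.E)).filter fun F => F.card = s ∧ G.IsBond F).card

/-- Adjacency of vertices. -/
def Adj (u v : G.V) : Prop :=
  ∃ e : G.E, (G.src e = u ∧ G.tgt e = v) ∨ (G.src e = v ∧ G.tgt e = u)

/-- `G` is simple: no loops and no parallel edges. -/
def IsSimple : Prop :=
  (∀ e : G.E, G.src e ≠ G.tgt e) ∧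
    ∀ e f : G.E,
      ((G.src e = G.src f ∧ G.tgt e = G.tgt f) ∨ (G.src e = G.tgt f ∧ G.tgt e = G.src f)) →
        e = f

end Multigraph

/-- `G ∈ 𝒢_{n,m}`: connected with `n` vertices and `m` edges. -/
def memG (G : Multigraph) (n m : ℕ) : Prop :=
  G.nV = n ∧ G.nE = m ∧ G.Connected

/-- Isomorphism of multigraphs. -/
structure MGIso (G H : Multigraph) where
  vMap : G.V ≃ H.V
  eMap : G.E ≃ H.E
  ends_eq : ∀ e : G.E,
    (H.src (eMap e) = vMap (G.src e) ∧ H.tgt (eMap e) = vMap (G.tgt e)) ∨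
    (H.src (eMap e) = vMap (G.tgt e) ∧ H.tgt (eMap e) = vMap (G.src e))

def IsIso (G H : Multigraph) : Prop := Nonempty (MGIso G H)

/-- `G` is `p`-optimal in `𝒢_{n,m}`. -/
def pOptimal (G : Multigraph) (n m : ℕ) (p : ℝ) : Prop :=
  memG G n m ∧ ∀ H : Multigraph, memG H n m → H.rel p ≤ G.rel p

/-- `G` is uniquely optimal in `𝒢_{n,m}`: strictly more reliable than every
non-isomorphic member, for every `p ∈ (0,1)`. -/
def UniquelyOptimal (G : Multigraph) (n m : ℕ) : Prop :=
  memG G n m ∧ ∀ H : Multigraph, memG H n m → ¬ IsIso G H →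
    ∀ p : ℝ, 0 < p → p < 1 → H.rel p < G.rel p

noncomputable instance quotFintype {α : Type} [Fintype α] {r : α → α → Prop} :
    Fintype (Quot r) :=
  letI := Classical.decEq (Quot r)
  Fintype.ofSurjective (Quot.mk r) fun q => Quot.exists_rep q

/-- Identification of the endpoints of zero-weight edges. -/
def zeroRel (D : Multigraph) (w : D.E → ℕ) : D.V → D.V → Prop :=
  fun u v => ∃ e : D.E, w e = 0 ∧ D.src e = u ∧ D.tgt e = v

/-- The `j`-th node along the chain replacing the edge `e` (whose chain has `w e` edges). -/
def chainNode (D : Multigraph) (w : D.E → ℕ) (e : D.E) (j : ℕ) :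
    Quot (zeroRel D w) ⊕ (Σ f : D.E, Fin (w f - 1)) :=
  if h : 0 < j ∧ j < w e then Sum.inr ⟨e, ⟨j - 1, by omega⟩⟩
  else if j = 0 then Sum.inl (Quot.mk _ (D.src e))
  else Sum.inl (Quot.mk _ (D.tgt e))

/-- The weak subdivision of `D` determined by the chain lengths `w`: each edge `e` is
replaced by a chain with `w e` edges; zero-weight edges are contracted. -/
def subdivide (D : Multigraph) (w : D.E → ℕ) : Multigraph where
  V := Quot (zeroRel D w) ⊕ (Σ f : D.E, Fin (w f - 1))
  E := Σ f : D.E, Fin (w f)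
  src f := chainNode D w f.1 f.2.val
  tgt f := chainNode D w f.1 (f.2.val + 1)

/-- The zero-weight edges contain no cycle (no "zero cycle"): they form a forest. -/
def ZeroAcyclic (D : Multigraph) (w : D.E → ℕ) : Prop :=
  Fintype.card (Quot (zeroRel D w)) +
      (Finset.univ.filter fun e : D.E => w e = 0).card = Fintype.card D.V

/-- `G` is a weak subdivision of `D` with chain lengths `w`. -/
def IsWeakSubdivision (G D : Multigraph) (w : D.E → ℕ) : Prop :=
  ZeroAcyclic D w ∧ IsIso G (subdivide D w)

/-- `D` is a weak distillation of `G`. -/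
def IsWeakDistillation (D G : Multigraph) : Prop :=
  ∃ w : D.E → ℕ, IsWeakSubdivision G D w

/-- The chain lengths differ pairwise by at most one. -/
def BalancedWeights {E : Type} (w : E → ℕ) : Prop := ∀ e f : E, w e ≤ w f + 1

/-- `D ∈ 𝒟_k`: connected, cubic, 3-edge-connected, of exceedance `k`. -/
def memDk (k : ℕ) (D : Multigraph) : Prop :=
  D.Connected ∧ (∀ v : D.V, D.deg v = 3) ∧
    (∀ F : Finset D.E, D.Disconnects F → 3 ≤ F.card) ∧ D.nE = D.nV + k

/-- Identification of the two endpoints of the edge `e`. -/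
def contractRel (G : Multigraph) (e : G.E) : G.V → G.V → Prop :=
  fun u v => u = G.src e ∧ v = G.tgt e

/-- Contraction of the edge `e`. -/
def Multigraph.contract (G : Multigraph) (e : G.E) : Multigraph :=
  letI := Classical.decEq G.E
  { V := Quot (contractRel G e)
    E := {f : G.E // f ≠ e}
    src := fun f => Quot.mk _ (G.src f.1)
    tgt := fun f => Quot.mk _ (G.tgt f.1) }

/-- `G'` is obtained from `G` by shifting an edge: in an intermediate graph `H`
(the expansion of `G` at a vertex by the new edge `e'`), the edges `e, e'` form a
2-bond; contracting `e'` gives back `G`, while contracting `e` gives `G'`. -/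
def IsShiftOf (G G' : Multigraph) : Prop :=
  ∃ (H : Multigraph) (e e' : H.E), e ≠ e' ∧
    H.src e ≠ H.tgt e ∧ H.src e' ≠ H.tgt e' ∧
    H.IsBond {e, e'} ∧
    IsIso (H.contract e') G ∧ IsIso (H.contract e) G'

/-- Equivalence of graphs: repeated edge shifting. -/
def EquivalentGraphs (G G' : Multigraph) : Prop :=
  Relation.ReflTransGen IsShiftOf G G'

/-- `G'` is obtained from `G` by moving the (non-loop) edge `e`: contracting `e` and
expanding a new edge, identified with `e` via `φ`, at an arbitrary vertex.
Equivalently, `G/e` and `G'/φ e` agree, compatibly with the edge identification `φ`. -/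
def MovedEdge (G G' : Multigraph) (φ : G.E ≃ G'.E) (e : G.E) : Prop :=
  G.src e ≠ G.tgt e ∧ G'.src (φ e) ≠ G'.tgt (φ e) ∧
  ∃ ψ : Quot (contractRel G e) ≃ Quot (contractRel G' (φ e)),
    ∀ f : G.E, f ≠ e →
      ((ψ (Quot.mk _ (G.src f)) = Quot.mk _ (G'.src (φ f)) ∧
        ψ (Quot.mk _ (G.tgt f)) = Quot.mk _ (G'.tgt (φ f))) ∨
       (ψ (Quot.mk _ (G.src f)) = Quot.mk _ (G'.tgt (φ f)) ∧
        ψ (Quot.mk _ (G.tgt f)) = Quot.mk _ (G'.src (φ f))))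

/-- Move one edge from the chain `a` to the chain `b`. -/
def moveWeight {E : Type} (w : E → ℕ) (a b : E) : E → ℕ :=
  fun g => if g = b then w b + 1 else if g = a then w a - 1 else w g

/-- The chains of maximal length. -/
def maxChains (D : Multigraph) (w : D.E → ℕ) : Finset D.E :=
  Finset.univ.filter fun e => ∀ f : D.E, w f ≤ w e

/-- The chains of minimal length. -/
def minChains (D : Multigraph) (w : D.E → ℕ) : Finset D.E :=
  Finset.univ.filter fun e => ∀ f : D.E, w e ≤ w f

/-- Degree of `v` within the edge set `S`. -/
def degIn (D : Multigraph) (S : Finset D.E) (v : D.V) : ℕ :=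
  (S.filter fun e => D.src e = v).card + (S.filter fun e => D.tgt e = v).card

/-- `S` is a matching (pairwise non-adjacent edges). -/
def IsMatchingIn (D : Multigraph) (S : Finset D.E) : Prop := ∀ v : D.V, degIn D S v ≤ 1

/-- `S` is a path with three edges. -/
def IsPath3In (D : Multigraph) (S : Finset D.E) : Prop :=
  S.card = 3 ∧ (∀ v : D.V, degIn D S v ≤ 2) ∧
    (Finset.univ.filter fun v : D.V => degIn D S v = 1).card = 2

/-- `S` is the disjoint union of a path with three edges and a single edge. -/
def IsPath3PlusEdgeIn (D : Multigraph) (S : Finset D.E) : Prop :=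
  S.card = 4 ∧ (∀ v : D.V, degIn D S v ≤ 2) ∧
    (Finset.univ.filter fun v : D.V => degIn D S v = 1).card = 4 ∧
    ∃ e ∈ S, degIn D S (D.src e) = 2 ∧ degIn D S (D.tgt e) = 2

/-- `S` is the disjoint union of two paths with two edges each. -/
def IsTwoPlusTwoIn (D : Multigraph) (S : Finset D.E) : Prop :=
  S.card = 4 ∧ (∀ v : D.V, degIn D S v ≤ 2) ∧
    (Finset.univ.filter fun v : D.V => degIn D S v = 1).card = 4 ∧
    ∀ e ∈ S, degIn D S (D.src e) = 1 ∨ degIn D S (D.tgt e) = 1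

/-- Two edges sharing a vertex. -/
def AdjEdges (D : Multigraph) (a b : D.E) : Prop :=
  ∃ v : D.V, (D.src a = v ∨ D.tgt a = v) ∧ (D.src b = v ∨ D.tgt b = v)

/-- The number of incidences of edges of weight `c` at the vertex `u`. -/
def incCount (D : Multigraph) (w : D.E → ℕ) (u : D.V) (c : ℕ) : ℕ :=
  (Finset.univ.filter fun e : D.E => D.src e = u ∧ w e = c).card +
    (Finset.univ.filter fun e : D.E => D.tgt e = u ∧ w e = c).card

/-- The `π^v`-value of the vertex `u`: the number of incident edges of weight `q + 1`
minus the number of incident edges of weight `q - 1`. -/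
def piV (D : Multigraph) (w : D.E → ℕ) (q : ℕ) (u : D.V) : ℤ :=
  (incCount D w u (q + 1) : ℤ) -
    (if q = 0 then 0 else (incCount D w u (q - 1) : ℤ))

/-- The `π^v`-values are balanced: pairwise differences at most one. -/
def BalancedPiV (D : Multigraph) (w : D.E → ℕ) (q : ℕ) : Prop :=
  ∀ u v : D.V, piV D w q u ≤ piV D w q v + 1

/-- The standard weight `q`, where `m = 3kq + r` with `-3k/2 < r ≤ 3k/2`. -/
def stdWeight (m k : ℕ) : ℕ := (2 * m + 3 * k - 1) / (6 * k)

/-- `w` is a balanced weighting of `D` of total size `m` (the implied weak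
subdivision is the generic member of `ℬ_m(D)`). -/
def IsBalancedWeighting (D : Multigraph) (w : D.E → ℕ) (m : ℕ) : Prop :=
  (∑ e : D.E, w e) = m ∧ BalancedWeights w ∧ ZeroAcyclic D w

/-- Every 3-bond of `D` is trivial (consists of the three edges at a single vertex). -/
def OnlyTrivialThreeBonds (D : Multigraph) : Prop :=
  ∀ F : Finset D.E, D.IsBond F → F.card = 3 →
    ∃ u : D.V, F = Finset.univ.filter fun e => D.src e = u ∨ D.tgt e = u

/-- The 3-dipole: two vertices joined by three parallel edges. -/
def dipole3 : Multigraph where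
  V := Fin 2
  E := Fin 3
  src _ := 0
  tgt _ := 1

/-- The complete graph `K₄`. -/
def K4 : Multigraph where
  V := Fin 4
  E := {p : Fin 4 × Fin 4 // p.1 < p.2}
  src p := p.1.1
  tgt p := p.1.2

/-- The complete bipartite graph `K_{3,3}`. -/
def K33 : Multigraph where
  V := Fin 3 ⊕ Fin 3
  E := Fin 3 × Fin 3
  src p := Sum.inl p.1
  tgt p := Sum.inr p.2

/-- The triangular prism `Π₃`; the edges `Sum.inr i` are the rungs. -/
def prism : Multigraph where
  V := Fin 3 × Bool
  E := (Fin 3 × Bool) ⊕ Fin 3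
  src := fun e => match e with
    | Sum.inl (i, b) => (i, b)
    | Sum.inr i => (i, false)
  tgt := fun e => match e with
    | Sum.inl (i, b) => (i + 1, b)
    | Sum.inr i => (i, true)

/-- The Wagner graph (the 4-Möbius ladder): the edges `Sum.inl i` are the rails
(the 8-cycle) and the edges `Sum.inr j` are the rungs. -/
def wagner : Multigraph where
  V := Fin 8
  E := Fin 8 ⊕ Fin 4
  src := fun e => match e with
    | Sum.inl i => i
    | Sum.inr j => ⟨j.val, by omega⟩
  tgt := fun e => match e with
    | Sum.inl i => i + 1
    | Sum.inr j => ⟨j.val + 4, by omega⟩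

/-- The Petersen graph. -/
def petersen : Multigraph where
  V := Fin 5 × Bool
  E := Fin 5 ⊕ Fin 5 ⊕ Fin 5
  src := fun e => match e with
    | Sum.inl i => (i, false)
    | Sum.inr (Sum.inl i) => (i, false)
    | Sum.inr (Sum.inr i) => (i, true)
  tgt := fun e => match e with
    | Sum.inl i => (i + 1, false)
    | Sum.inr (Sum.inl i) => (i, true)
    | Sum.inr (Sum.inr i) => (i + 2, true)


namespace Multigraph

lemma disc_iff (G : Multigraph) (F : Finset G.E) : G.Disconnects F ↔
    ∃ A : Set G.V, A.Nonempty ∧ Aᶜ.Nonempty ∧ ∀ e, e ∉ F → (G.src e ∈ A ↔ G.tgt e ∈ A) := by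
  unfold Disconnects ConnOn
  constructor
  · intro h
    push Not at h
    obtain ⟨u, v, huv⟩ := h
    refine ⟨{x | Relation.ReflTransGen (G.stepOn (univ \ F)) u x}, ⟨u, .refl⟩, ⟨v, huv⟩, ?_⟩
    intro e he
    constructor
    · intro h1
      exact h1.tail ⟨e, by simp [he], Or.inl ⟨rfl, rfl⟩⟩
    · intro h1
      exact h1.tail ⟨e, by simp [he], Or.inr ⟨rfl, rfl⟩⟩
  · rintro ⟨A, ⟨u, hu⟩, ⟨v, hv⟩, hA⟩ h
    have : ∀ x, Relation.ReflTransGen (G.stepOn (univ \ F)) u x → x ∈ A := by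
      intro x hx
      induction hx with
      | refl => exact hu
      | tail _ h2 ih =>
        obtain ⟨e, he, h3⟩ := h2
        have he' : e ∉ F := by simpa using he
        rcases h3 with ⟨h3, h4⟩ | ⟨h3, h4⟩
        · rw [← h4]; exact (hA e he').1 (h3 ▸ ih)
        · rw [← h3]; exact (hA e he').2 (h4 ▸ ih)
    exact hv (this v (h u v))

lemma disc_mono (G : Multigraph) {F F' : Finset G.E} (h : F ⊆ F') (hF : G.Disconnects F) :
    G.Disconnects F' := by
  rw [disc_iff] at *
  obtain ⟨A, h1, h2, h3⟩ := hF
  exact ⟨A, h1, h2, fun e he => h3 e (fun h' => he (h h'))⟩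

lemma connected_iff (G : Multigraph) : G.Connected ↔ ¬ G.Disconnects ∅ := by
  unfold Disconnects Connected
  simp

def cutc (G : Multigraph) (A : Set G.V) : Finset G.E :=
  univ.filter fun e => ¬ (G.src e ∈ A ↔ G.tgt e ∈ A)

lemma mem_cutc (G : Multigraph) (A : Set G.V) (e : G.E) :
    e ∈ G.cutc A ↔ ¬ (G.src e ∈ A ↔ G.tgt e ∈ A) := by simp [cutc]

def TEC (G : Multigraph) : Prop := ∀ F : Finset G.E, G.Disconnects F → 3 ≤ F.card

lemma tec_iff (G : Multigraph) : G.TEC ↔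
    ∀ A : Set G.V, A.Nonempty → Aᶜ.Nonempty → 3 ≤ (G.cutc A).card := by
  constructor
  · intro h A h1 h2
    apply h
    rw [disc_iff]
    refine ⟨A, h1, h2, fun e he => ?_⟩
    rw [mem_cutc] at he
    tauto
  · intro h F hF
    rw [disc_iff] at hF
    obtain ⟨A, h1, h2, h3⟩ := hF
    refine (h A h1 h2).trans (card_le_card ?_)
    intro e he
    rw [mem_cutc] at he
    by_contra h4
    exact he (h3 e h4)

lemma TEC.connected {G : Multigraph} (h : G.TEC) : G.Connected := by
  rw [connected_iff]
  intro h'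
  simpa using h _ h'

lemma submod (G : Multigraph) (A B : Set G.V) :
    (G.cutc (A ∩ B)).card + (G.cutc (A ∪ B)).card ≤ (G.cutc A).card + (G.cutc B).card := by
  simp only [cutc, card_filter]
  rw [← sum_add_distrib, ← sum_add_distrib]
  apply sum_le_sum
  intro e _
  by_cases h1 : G.src e ∈ A <;> by_cases h2 : G.tgt e ∈ A <;> by_cases h3 : G.src e ∈ B <;>
    by_cases h4 : G.tgt e ∈ B <;> simp [h1, h2, h3, h4]

lemma sum_deg (G : Multigraph) : ∑ v, G.deg v = 2 * Fintype.card G.E := by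
  unfold deg
  rw [sum_add_distrib]
  have h1 := card_eq_sum_card_fiberwise (f := G.src) (s := univ) (t := univ) (by simp)
  have h2 := card_eq_sum_card_fiberwise (f := G.tgt) (s := univ) (t := univ) (by simp)
  rw [card_univ] at h1 h2
  omega

lemma cutc_single_le (G : Multigraph) (v : G.V) : (G.cutc {v}).card ≤ G.deg v := by
  unfold deg
  refine le_trans (card_le_card ?_) (card_union_le _ _)
  intro e he
  rw [mem_cutc] at he
  simp at he ⊢
  tauto

lemma TEC.deg_ge {G : Multigraph} (h : G.TEC) (v : G.V) (hn : 2 ≤ Fintype.card G.V) :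
    3 ≤ G.deg v := by
  refine le_trans ?_ (G.cutc_single_le v)
  refine (tec_iff G).1 h _ ⟨v, rfl⟩ ?_
  obtain ⟨u, hu⟩ := Fintype.exists_ne_of_one_lt_card hn v
  exact ⟨u, hu⟩

lemma sum_deg_ge (G : Multigraph) (c : ℕ) (h : ∀ v, c ≤ G.deg v) :
    c * Fintype.card G.V ≤ 2 * Fintype.card G.E := by
  rw [← sum_deg]
  have := sum_le_sum (s := univ) (fun v _ => h v)
  simpa [mul_comm] using this

lemma TEC.card_le {G : Multigraph} (h : G.TEC) {k : ℕ} (hk : 1 ≤ k)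
    (hc : Fintype.card G.E = Fintype.card G.V + k) : Fintype.card G.V ≤ 2 * k := by
  by_cases hn : 2 ≤ Fintype.card G.V
  · have := G.sum_deg_ge 3 (fun v => h.deg_ge v hn)
    omega
  · omega

lemma TEC.cubic {G : Multigraph} (h : G.TEC) {k : ℕ} (hk : 1 ≤ k)
    (hc : Fintype.card G.E = Fintype.card G.V + k) (hV : Fintype.card G.V = 2 * k) (v : G.V) :
    G.deg v = 3 := by
  have h3 : ∀ v ∈ (univ : Finset G.V), 3 ≤ G.deg v := fun v _ => h.deg_ge v (by omega)
  have hs : ∑ v : G.V, 3 = ∑ v, G.deg v := by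
    rw [sum_deg]; simp; omega
  exact ((sum_eq_sum_iff_of_le h3).1 hs v (mem_univ v)).symm

/-- transitivity of series relation -/
lemma series_trans (G : Multigraph) {e f g : G.E} (hef : e ≠ f) (heg : e ≠ g)
    (hf : ¬ G.Disconnects {f}) (h1 : G.Disconnects {e, f}) (h2 : G.Disconnects {f, g}) :
    G.Disconnects {e, g} := by
  by_cases he : G.Disconnects {e}
  · exact G.disc_mono (by simp) he
  by_cases hg : G.Disconnects {g}
  · exact G.disc_mono (by simp) hg
  rw [disc_iff] at *
  obtain ⟨A, a1, a2, a3⟩ := h1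
  obtain ⟨B, b1, b2, b3⟩ := h2
  simp only [mem_insert, mem_singleton, not_or] at a3 b3
  have hA : ¬ (G.src f ∈ A ↔ G.tgt f ∈ A) := by
    intro h
    refine he ⟨A, a1, a2, fun x hx => ?_⟩
    by_cases hxf : x = f
    · rw [hxf]; exact h
    · exact a3 x ⟨by simpa using hx, hxf⟩
  have hB : ¬ (G.src f ∈ B ↔ G.tgt f ∈ B) := by
    intro h
    refine hg ⟨B, b1, b2, fun x hx => ?_⟩
    by_cases hxf : x = f
    · rw [hxf]; exact h
    · exact b3 x ⟨hxf, by simpa using hx⟩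
  refine ⟨{x | ¬ (x ∈ A ↔ x ∈ B)}, ?_, ?_, ?_⟩
  · by_contra hne
    have hAB : ∀ x, x ∈ A ↔ x ∈ B := by
      intro x
      by_contra hx
      exact hne ⟨x, hx⟩
    refine hf ⟨A, a1, a2, fun x hx => ?_⟩
    have hx' : x ≠ f := by simpa using hx
    by_cases hxe : x = e
    · rw [hAB, hAB]; exact b3 x ⟨hx', by rw [hxe]; exact heg⟩
    · exact a3 x ⟨hxe, hx'⟩
  · by_contra hne
    have hAB : ∀ x, ¬ (x ∈ A ↔ x ∈ B) := by
      intro x hx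
      exact hne ⟨x, by simpa using hx⟩
    refine hf ⟨A, a1, a2, fun x hx => ?_⟩
    have hx' : x ≠ f := by simpa using hx
    by_cases hxe : x = e
    · have := b3 x ⟨hx', by rw [hxe]; exact heg⟩
      have h3 := hAB (G.src x)
      have h4 := hAB (G.tgt x)
      tauto
    · exact a3 x ⟨hxe, hx'⟩
  · intro x hx
    simp only [mem_insert, mem_singleton, not_or] at hx
    by_cases hxf : x = f
    · subst hxf
      simp only [Set.mem_ofPred_eq]
      tauto
    · have h3 := a3 x ⟨hx.1, hxf⟩
      have h4 := b3 x ⟨hxf, hx.2⟩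
      simp only [Set.mem_ofPred_eq]
      tauto

end Multigraph


namespace Multigraph

/-- other end / end of half edges -/
def hEnd (G : Multigraph) (h : G.E × Bool) : G.V := if h.2 then G.src h.1 else G.tgt h.1
def oEnd (G : Multigraph) (h : G.E × Bool) : G.V := if h.2 then G.tgt h.1 else G.src h.1

lemma card_hEnd (G : Multigraph) (v : G.V) :
    (univ.filter fun h : G.E × Bool => G.hEnd h = v).card = G.deg v := by
  have e1 : ∀ e, G.hEnd (e, true) = G.src e := fun e => by simp [hEnd]
  have e2 : ∀ e, G.hEnd (e, false) = G.tgt e := fun e => by simp [hEnd]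
  simp only [deg, card_filter, Fintype.sum_prod_type, Fintype.sum_bool, sum_add_distrib, e1, e2]

/-- choice of the half-edges -/
lemma choose_half (G : Multigraph) (hG : G.TEC) (v : G.V) (hv : 4 ≤ G.deg v) :
    ∃ h1 h2 : G.E × Bool, h1.1 ≠ h2.1 ∧ G.hEnd h1 = v ∧ G.hEnd h2 = v ∧
      ∀ A : Set G.V, v ∉ A → G.oEnd h1 ∈ A → G.oEnd h2 ∈ A → 4 ≤ (G.cutc A).card := by
  rw [tec_iff] at hG
  rw [← card_hEnd] at hv
  set Hv := univ.filter fun h : G.E × Bool => G.hEnd h = v with hHv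
  by_cases hl : ∃ h1 ∈ Hv, G.oEnd h1 = v
  · obtain ⟨h1, hh1, ho⟩ := hl
    have : ∃ h2 ∈ Hv, h2.1 ≠ h1.1 := by
      by_contra hcon
      push Not at hcon
      have hsub : Hv ⊆ {(h1.1, true), (h1.1, false)} := by
        rintro ⟨e, b⟩ he
        have := hcon _ he
        simp at this
        cases b <;> simp [this]
      have := (card_le_card hsub).trans card_le_two
      omega
    obtain ⟨h2, hh2, hne⟩ := this
    refine ⟨h1, h2, hne.symm, by simpa [Hv] using hh1, by simpa [Hv] using hh2, ?_⟩
    intro A hA hA'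
    rw [ho] at hA'
    exact absurd hA' hA
  · push Not at hl
    have hinj : Set.InjOn Prod.fst (Hv : Set (G.E × Bool)) := by
      rintro ⟨e, b⟩ he ⟨e', b'⟩ he' h
      simp at h
      subst h
      have h1 := hl _ he
      have h2 := hl _ he'
      simp [Hv] at he he'
      cases b <;> cases b' <;> simp_all [hEnd, oEnd]
    have hcard : 4 ≤ (Hv.image Prod.fst).card := by
      rw [card_image_of_injOn hinj]; exact hv
    have hne : Hv.Nonempty := by rw [← card_pos]; omega
    obtain ⟨h1, hh1⟩ := hne
    have hh1' : G.hEnd h1 = v := by simpa [Hv] using hh1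
    by_cases ht : ∃ A : Set G.V, v ∉ A ∧ G.oEnd h1 ∈ A ∧ (G.cutc A).card ≤ 3
    · obtain ⟨M, hM⟩ := (Set.toFinite {A : Set G.V | v ∉ A ∧ G.oEnd h1 ∈ A ∧ (G.cutc A).card ≤ 3}).exists_maximal ht
      obtain ⟨⟨m1, m2, m3⟩, hmax⟩ := hM
      obtain ⟨e2, he2, he2'⟩ := exists_mem_notMem_of_card_lt_card (lt_of_le_of_lt m3 hcard)
      rw [mem_image] at he2
      obtain ⟨h2, hh2, rfl⟩ := he2
      have hh2' : G.hEnd h2 = v := by simpa [Hv] using hh2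
      have ho2 : G.oEnd h2 ∉ M := by
        intro h
        apply he2'
        rw [mem_cutc]
        obtain ⟨e, b⟩ := h2
        cases b <;> simp_all [hEnd, oEnd]
      refine ⟨h1, h2, ?_, hh1', hh2', ?_⟩
      · intro h
        have : h1 = h2 := hinj hh1 hh2 h
        exact ho2 (this ▸ m2)
      · intro A a1 a2 a3
        by_contra hlt
        have hs := G.submod M A
        have h3 := hG (M ∩ A) ⟨_, m2, a2⟩ ⟨v, fun h => m1 h.1⟩
        have : M ∪ A ≤ M := hmax (y := M ∪ A) ⟨fun h => h.elim m1 a1, Or.inl m2, by omega⟩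
          (Set.subset_union_left)
        exact ho2 (this (Or.inr a3))
    · push Not at ht
      obtain ⟨e2, he2, he2'⟩ := exists_mem_notMem_of_card_lt_card
        (lt_of_lt_of_le (show ({h1.1} : Finset G.E).card < 4 by simp) hcard)
      rw [mem_image] at he2
      obtain ⟨h2, hh2, rfl⟩ := he2
      refine ⟨h1, h2, ?_, hh1', by simpa [Hv] using hh2, ?_⟩
      · intro h
        exact he2' (by simp [h])
      · intro A a1 a2 a3
        exact ht A a1 a2

/-- expanded graph -/
abbrev expand (G : Multigraph) (v : G.V) (h1 h2 : G.E × Bool) : Multigraph where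
  V := Option G.V
  E := Option G.E
  src o := match o with
    | none => none
    | some e => if (e, true) = h1 ∨ (e, true) = h2 then none else some (G.src e)
  tgt o := match o with
    | none => some v
    | some e => if (e, false) = h1 ∨ (e, false) = h2 then none else some (G.tgt e)

lemma cutc_compl (G : Multigraph) (A : Set G.V) : G.cutc Aᶜ = G.cutc A := by
  ext e
  rw [mem_cutc, mem_cutc]
  simp only [Set.mem_compl_iff]
  tauto

lemma expand_tec (G : Multigraph) (hG : G.TEC) (v : G.V) (h1 h2 : G.E × Bool)
    (hne : h1.1 ≠ h2.1) (hv1 : G.hEnd h1 = v) (hv2 : G.hEnd h2 = v)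
    (hA : ∀ A : Set G.V, v ∉ A → G.oEnd h1 ∈ A → G.oEnd h2 ∈ A → 4 ≤ (G.cutc A).card) :
    (G.expand v h1 h2).TEC := by
  rw [tec_iff] at hG ⊢
  suffices H : ∀ B : Set (G.expand v h1 h2).V, none ∈ B → Bᶜ.Nonempty →
      3 ≤ ((G.expand v h1 h2).cutc B).card by
    intro B b1 b2
    by_cases hB : (none : Option G.V) ∈ B
    · exact H B hB b2
    · rw [← cutc_compl]
      exact H _ hB (by rwa [compl_compl])
  intro B hB hBc
  set A : Set G.V := {u | (some u : Option G.V) ∈ B} with hAdef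
  have hmemA : ∀ u, u ∈ A ↔ (some u : Option G.V) ∈ B := fun u => Iff.rfl
  by_cases hvB : v ∈ A
  · have hh := hG A ⟨v, hvB⟩ (by
      obtain ⟨b, hb⟩ := hBc
      cases b with
      | none => exact absurd hB hb
      | some u => exact ⟨u, hb⟩)
    refine hh.trans ?_
    rw [← card_map (Function.Embedding.some)]
    apply card_le_card
    intro o ho
    simp only [mem_map, mem_cutc] at ho
    obtain ⟨e, he, rfl⟩ := ho
    rw [mem_cutc]
    have e1 : ((G.expand v h1 h2).src (some e) ∈ B) ↔ G.src e ∈ A := by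
      simp only [expand]
      split_ifs with h
      · have : G.src e = v := by
          rcases h with h | h
          · rw [← hv1, ← h]; simp [hEnd]
          · rw [← hv2, ← h]; simp [hEnd]
        rw [this]; exact ⟨fun _ => hvB, fun _ => hB⟩
      · rfl
    have e2 : ((G.expand v h1 h2).tgt (some e) ∈ B) ↔ G.tgt e ∈ A := by
      simp only [expand]
      split_ifs with h
      · have : G.tgt e = v := by
          rcases h with h | h
          · rw [← hv1, ← h]; simp [hEnd]
          · rw [← hv2, ← h]; simp [hEnd]
        rw [this]; exact ⟨fun _ => hvB, fun _ => hB⟩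
      · rfl
    intro hcon
    apply he
    rw [← e1, ← e2]; exact hcon
  · -- new edge crosses
    have c0 : (none : Option G.E) ∈ (G.expand v h1 h2).cutc B := by
      rw [mem_cutc]
      show ¬ ((none : Option G.V) ∈ B ↔ (some v : Option G.V) ∈ B)
      rw [← hmemA]; tauto
    have c1 : ∀ h : G.E × Bool, (h = h1 ∨ h = h2) →
        ((some h.1 : Option G.E) ∈ (G.expand v h1 h2).cutc B ↔ G.oEnd h ∉ A) := by
      rintro ⟨e, b⟩ hh
      rw [mem_cutc]
      have hx : ¬ ((e, !b) = h1 ∨ (e, !b) = h2) := by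
        rintro (h | h) <;> rcases hh with h' | h'
        · rw [← h] at h'; simp at h'
        · rw [← h, ← h'] at hne; simp at hne
        · rw [← h, ← h'] at hne; simp at hne
        · rw [← h] at h'; simp at h'
      cases b
      · simp only [Bool.not_false] at hx
        simp only [expand, if_pos hh, if_neg hx, oEnd, hmemA]
        simp [hB]
      · simp only [Bool.not_true] at hx
        simp only [expand, if_pos hh, if_neg hx, oEnd, hmemA]
        simp [hB]
    have c2 : ∀ e, e ≠ h1.1 → e ≠ h2.1 →
        ((some e : Option G.E) ∈ (G.expand v h1 h2).cutc B ↔ e ∈ G.cutc A) := by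
      intro e n1 n2
      rw [mem_cutc, mem_cutc]
      have hx : ∀ b, ¬ ((e, b) = h1 ∨ (e, b) = h2) := by
        rintro b (h | h)
        · exact n1 (by rw [← h])
        · exact n2 (by rw [← h])
      simp only [expand, if_neg (hx _), hmemA]
    have hcards : (G.cutc A \ {h1.1, h2.1}).card + 2 ≥ (G.cutc A).card := by
      have := le_card_sdiff ({h1.1, h2.1} : Finset G.E) (G.cutc A)
      have h3 := card_le_two (a := h1.1) (b := h2.1)
      omega
    have hcards1 : ∀ x, (G.cutc A \ {x}).card + 1 ≥ (G.cutc A).card := by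
      intro x
      have := le_card_sdiff ({x} : Finset G.E) (G.cutc A)
      simp at this
      omega
    have hnone : ∀ S : Finset G.E, (insert none (S.map Function.Embedding.some)).card = S.card + 1 := by
      intro S
      rw [card_insert_of_notMem (by simp), card_map]
    have hmain : ∀ S : Finset G.E, (∀ e ∈ S, (some e : Option G.E) ∈ (G.expand v h1 h2).cutc B) →
        2 ≤ S.card → 3 ≤ ((G.expand v h1 h2).cutc B).card := by
      intro S hS h2
      have := hnone S
      refine le_trans (b := (insert none (S.map Function.Embedding.some)).card) (by omega) ?_
      apply card_le_card
      intro o ho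
      simp only [mem_insert, mem_map] at ho
      rcases ho with rfl | ⟨e, he, rfl⟩
      · exact c0
      · exact hS e he
    have d1 := c1 h1 (Or.inl rfl)
    have d2 := c1 h2 (Or.inr rfl)
    have hAc : Aᶜ.Nonempty := ⟨v, hvB⟩
    have hcutoff : ∀ e ∈ G.cutc A \ {h1.1, h2.1},
        (some e : Option G.E) ∈ (G.expand v h1 h2).cutc B := by
      intro e he
      simp only [mem_sdiff, mem_insert, mem_singleton, not_or] at he
      exact (c2 e he.2.1 he.2.2).2 he.1
    by_cases x1 : G.oEnd h1 ∈ A <;> by_cases x2 : G.oEnd h2 ∈ A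
    · have := hA A hvB x1 x2
      exact hmain _ hcutoff (by omega)
    · have h3 := hG A ⟨_, x1⟩ hAc
      have := d2.2 x2
      apply hmain (insert h2.1 (G.cutc A \ {h1.1, h2.1}))
      · intro e he
        rw [mem_insert] at he
        rcases he with rfl | he
        · exact this
        · exact hcutoff e he
      · rw [card_insert_of_notMem (by simp)]; omega
    · have h3 := hG A ⟨_, x2⟩ hAc
      have := d1.2 x1
      apply hmain (insert h1.1 (G.cutc A \ {h1.1, h2.1}))
      · intro e he
        rw [mem_insert] at he
        rcases he with rfl | he
        · exact this
        · exact hcutoff e he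
      · rw [card_insert_of_notMem (by simp)]; omega
    · apply hmain {h1.1, h2.1}
      · intro e he
        simp only [mem_insert, mem_singleton] at he
        rcases he with rfl | rfl
        · exact d1.2 x1
        · exact d2.2 x2
      · rw [card_pair hne]

/-- `D` expands to give `G` by contraction of a set of edges -/
def Exp (D G : Multigraph) : Prop :=
  ∃ (q : D.V → G.V) (ι : G.E → D.E), Function.Surjective q ∧ Function.Injective ι ∧
    (∀ x, q (D.src (ι x)) = G.src x ∧ q (D.tgt (ι x)) = G.tgt x) ∧
    (∀ e, e ∉ Set.range ι → q (D.src e) = q (D.tgt e)) ∧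
    (∀ u v, q u = q v → ∀ T : Set D.V,
      (∀ e, e ∉ Set.range ι → (D.src e ∈ T ↔ D.tgt e ∈ T)) → (u ∈ T ↔ v ∈ T))

lemma Exp.refl (G : Multigraph) : Exp G G :=
  ⟨id, id, Function.surjective_id, Function.injective_id, by simp, by simp, by
    intro u v h T _; simp at h; rw [h]⟩

lemma exists_expand (G : Multigraph) (hG : G.TEC) {k : ℕ}
    (hc : Fintype.card G.E = Fintype.card G.V + k) (hV : 1 ≤ Fintype.card G.V)
    (hk : Fintype.card G.V < 2 * k) :
    ∃ D : Multigraph, D.TEC ∧ Fintype.card D.E = Fintype.card D.V + k ∧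
      Fintype.card D.V = Fintype.card G.V + 1 ∧ ∀ G0, Exp G G0 → Exp D G0 := by
  have hex : ∃ v, 4 ≤ G.deg v := by
    by_contra hcon
    push Not at hcon
    have : ∑ v, G.deg v ≤ ∑ v : G.V, 3 := sum_le_sum (fun v _ => by have := hcon v; omega)
    rw [sum_deg] at this
    simp at this
    omega
  obtain ⟨v, hv⟩ := hex
  obtain ⟨h1, h2, hne, hv1, hv2, hA⟩ := G.choose_half hG v hv
  have cV : Fintype.card (G.expand v h1 h2).V = Fintype.card G.V + 1 := by
    exact Fintype.card_option
  have cE : Fintype.card (G.expand v h1 h2).E = Fintype.card G.E + 1 := by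
    exact Fintype.card_option
  refine ⟨G.expand v h1 h2, G.expand_tec hG v h1 h2 hne hv1 hv2 hA, by omega, by omega, ?_⟩
  rintro G0 ⟨q, ι, q1, i1, hq, hz, hT⟩
  have s1 : ∀ e, ((e, true) = h1 ∨ (e, true) = h2) → G.src e = v := by
    rintro e (h | h)
    · rw [← hv1, ← h]; simp [hEnd]
    · rw [← hv2, ← h]; simp [hEnd]
  have s2 : ∀ e, ((e, false) = h1 ∨ (e, false) = h2) → G.tgt e = v := by
    rintro e (h | h)
    · rw [← hv1, ← h]; simp [hEnd]
    · rw [← hv2, ← h]; simp [hEnd]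
  let π : Option G.V → G.V := fun o => o.getD v
  have p1 : ∀ e, π ((G.expand v h1 h2).src (some e)) = G.src e := by
    intro e
    simp only [expand]
    split_ifs with h
    · exact (s1 e h).symm
    · rfl
  have p2 : ∀ e, π ((G.expand v h1 h2).tgt (some e)) = G.tgt e := by
    intro e
    simp only [expand]
    split_ifs with h
    · exact (s2 e h).symm
    · rfl
  refine ⟨fun o => q (π o), fun x => some (ι x), ?_, ?_, ?_, ?_, ?_⟩
  · intro y
    obtain ⟨u, rfl⟩ := q1 y
    exact ⟨some u, rfl⟩
  · intro a b h
    exact i1 (Option.some.inj h)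
  · intro x
    exact ⟨(congrArg q (p1 (ι x))).trans (hq x).1, (congrArg q (p2 (ι x))).trans (hq x).2⟩
  · intro e he
    cases e with
    | none => rfl
    | some e =>
      show q (π _) = q (π _)
      rw [p1, p2]
      apply hz
      rintro ⟨x, rfl⟩
      exact he ⟨x, rfl⟩
  · intro u w huw T hTT
    have hnv : (none : Option G.V) ∈ T ↔ (some v : Option G.V) ∈ T := by
      apply hTT none
      rintro ⟨x, hx⟩
      exact absurd hx (by simp)
    have hπ : ∀ o : Option G.V, o ∈ T ↔ (some (π o) : Option G.V) ∈ T := by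
      intro o
      cases o with
      | none => exact hnv
      | some u => rfl
    have := hT (π u) (π w) huw {x | (some x : Option G.V) ∈ T} ?_
    · rw [hπ u, hπ w]; exact this
    · intro e he
      have := hTT (some e) (by
        rintro ⟨x, hx⟩
        exact he ⟨x, Option.some.inj hx⟩)
      rw [hπ, hπ ((G.expand v h1 h2).tgt (some e)), p1, p2] at this
      exact this

lemma exists_expand_to (G : Multigraph) (hG : G.TEC) {k : ℕ}
    (hc : Fintype.card G.E = Fintype.card G.V + k) (hV : 1 ≤ Fintype.card G.V)
    (N : ℕ) (hN : Fintype.card G.V ≤ N) (hk : N ≤ 2 * k) :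
    ∃ D : Multigraph, D.TEC ∧ Fintype.card D.E = Fintype.card D.V + k ∧
      Fintype.card D.V = N ∧ Exp D G := by
  induction N, hN using Nat.le_induction with
  | base => exact ⟨G, hG, hc, rfl, Exp.refl G⟩
  | succ N hN ih =>
    obtain ⟨D, d1, d2, d3, d4⟩ := ih (by omega)
    obtain ⟨D', e1, e2, e3, e4⟩ := D.exists_expand d1 d2 (by omega) (by omega)
    exact ⟨D', e1, e2, by omega, e4 G d4⟩

/-- existence of 3-edge-connected graphs -/
lemma exists_tec (k N : ℕ) (hN : 1 ≤ N) (hk : N ≤ 2 * k) :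
    ∃ D : Multigraph, D.TEC ∧ Fintype.card D.E = Fintype.card D.V + k ∧ Fintype.card D.V = N := by
  let B : Multigraph := { V := Unit, E := Fin (k + 1), src := fun _ => (), tgt := fun _ => () }
  have hB : B.TEC := by
    rw [tec_iff]
    rintro A ⟨u, hu⟩ ⟨v, hv⟩
    exact absurd hu hv
  obtain ⟨D, d1, d2, d3, _⟩ := B.exists_expand_to hB (k := k)
    (by simp [B]; omega) (by simp [B]) N (by simpa [B] using hN) hk
  exact ⟨D, d1, d2, d3⟩

end Multigraph


namespace Multigraph

lemma two_choose (s : ℕ) : 2 * ((s.choose 2 : ℕ) : ℤ) = s * (s - 1) := by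
  induction s with
  | zero => simp
  | succ n ih =>
    rw [Nat.choose_succ_succ' n 1]
    push_cast
    simp only [Nat.choose_one_right]
    linarith

lemma choose_ge (s : ℕ) (q : ℕ) : 2 * (q : ℤ) * s - q * (q + 1) ≤ 2 * ((s.choose 2 : ℕ) : ℤ) := by
  rw [two_choose]
  have : 0 ≤ ((s : ℤ) - q) * (s - q - 1) := by
    rcases le_or_gt (s : ℤ) q with h | h
    · nlinarith
    · nlinarith
  nlinarith

lemma choose_eq (s : ℕ) (q : ℕ) : 2 * (q : ℤ) * s - q * (q + 1) = 2 * ((s.choose 2 : ℕ) : ℤ) ↔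
    s = q ∨ s = q + 1 := by
  rw [two_choose]
  constructor
  · intro h
    have : ((s : ℤ) - q) * (s - q - 1) = 0 := by nlinarith
    rcases mul_eq_zero.1 this with h | h
    · left; omega
    · right; omega
  · rintro (rfl | rfl)
    · ring
    · push_cast; ring

lemma sum_choose_ge {C : Type} [Fintype C] (s : C → ℕ) (q : ℕ) :
    2 * (q : ℤ) * (∑ c, s c : ℕ) - Fintype.card C * (q * (q + 1)) ≤
      2 * ((∑ c, (s c).choose 2 : ℕ) : ℤ) := by
  have : ∑ c, (2 * (q : ℤ) * s c - q * (q + 1)) ≤ ∑ c, 2 * (((s c).choose 2 : ℕ) : ℤ) :=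
    sum_le_sum (fun c _ => choose_ge _ _)
  rw [sum_sub_distrib, ← mul_sum, ← mul_sum, ← mul_sum, sum_const, card_univ, nsmul_eq_mul, mul_left_comm] at this
  push_cast
  exact this

lemma sum_choose_eq {C : Type} [Fintype C] (s : C → ℕ) (q : ℕ) :
    2 * (q : ℤ) * (∑ c, s c : ℕ) - Fintype.card C * (q * (q + 1)) =
      2 * ((∑ c, (s c).choose 2 : ℕ) : ℤ) ↔ ∀ c, s c = q ∨ s c = q + 1 := by
  have h := sum_eq_sum_iff_of_le (s := univ) (fun c (_ : c ∈ univ) => choose_ge (s c) q)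
  rw [sum_sub_distrib, ← mul_sum, ← mul_sum, ← mul_sum, sum_const, card_univ, nsmul_eq_mul, mul_left_comm] at h
  simp only [choose_eq, mem_univ, true_imp_iff] at h
  push_cast
  exact h

def cls {E C : Type} [Fintype E] (cl : E → C) (c : C) : ℕ := (univ.filter fun e => cl e = c).card

lemma sum_cls {E C : Type} [Fintype E] [Fintype C] (cl : E → C) :
    ∑ c, cls cl c = Fintype.card E := by
  unfold cls
  have h1 := card_eq_sum_card_fiberwise (f := cl) (s := univ) (t := univ) (by simp)
  rw [card_univ] at h1
  exact h1.symm

def monoPairs {E C : Type} [Fintype E] (cl : E → C) : Finset (Finset E) :=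
  univ.filter fun F => F.card = 2 ∧ ∀ e ∈ F, ∀ f ∈ F, cl e = cl f

lemma card_monoPairs {E C : Type} [Fintype E] [Fintype C] (cl : E → C) :
    (monoPairs cl).card = ∑ c, (cls cl c).choose 2 := by
  have : monoPairs cl = univ.biUnion fun c => powersetCard 2 (univ.filter fun e => cl e = c) := by
    ext F
    simp only [monoPairs, mem_filter, mem_univ, true_and, mem_biUnion, mem_powersetCard]
    constructor
    · rintro ⟨h2, h⟩
      have hne : F.Nonempty := by rw [← card_pos]; omega
      obtain ⟨e, he⟩ := hne
      refine ⟨cl e, fun f hf => ?_, h2⟩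
      simpa using h f hf e he
    · rintro ⟨c, hc, h2⟩
      refine ⟨h2, fun e he f hf => ?_⟩
      have h3 := hc he
      have h4 := hc hf
      simp at h3 h4
      rw [h3, h4]
  rw [this, card_biUnion]
  · simp [cls]
  · intro c _ c' _ hcc
    rw [Function.onFun, disjoint_left]
    intro F h1 h2
    rw [mem_powersetCard] at h1 h2
    have hne : F.Nonempty := by rw [← card_pos]; omega
    obtain ⟨e, he⟩ := hne
    have h3 := h1.1 he
    have h4 := h2.1 he
    simp at h3 h4
    exact hcc (h3 ▸ h4)

def discPairs (G : Multigraph) : Finset (Finset G.E) :=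
  univ.filter fun F => F.card = 2 ∧ G.Disconnects F

lemma mono_sub (G : Multigraph) {C : Type} (cl : G.E → C)
    (h : ∀ e f, e ≠ f → cl e = cl f → G.Disconnects {e, f}) : monoPairs cl ⊆ G.discPairs := by
  intro F hF
  simp only [monoPairs, discPairs, mem_filter, mem_univ, true_and] at hF ⊢
  obtain ⟨h2, hF⟩ := hF
  refine ⟨h2, ?_⟩
  obtain ⟨e, f, hef, rfl⟩ := card_eq_two.1 h2
  exact h e f hef (hF e (by simp) f (by simp))

lemma d2_ge (G : Multigraph) {C : Type} [Fintype C] (cl : G.E → C)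
    (h : ∀ e f, e ≠ f → cl e = cl f → G.Disconnects {e, f}) :
    ∑ c, (cls cl c).choose 2 ≤ G.d 2 := by
  rw [← card_monoPairs]
  exact card_le_card (G.mono_sub cl h)

lemma d2_eq_conv (G : Multigraph) {C : Type} [Fintype C] (cl : G.E → C)
    (h : ∀ e f, e ≠ f → cl e = cl f → G.Disconnects {e, f})
    (heq : G.d 2 ≤ ∑ c, (cls cl c).choose 2) (e f : G.E) (hef : e ≠ f) (hd : G.Disconnects {e, f}) :
    cl e = cl f := by
  rw [← card_monoPairs] at heq
  have := eq_of_subset_of_card_le (G.mono_sub cl h) heq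
  have hm : ({e, f} : Finset G.E) ∈ G.discPairs := by
    simp only [discPairs, mem_filter, mem_univ, true_and]
    exact ⟨card_pair hef, hd⟩
  rw [← this] at hm
  simp only [monoPairs, mem_filter, mem_univ, true_and] at hm
  exact hm.2 e (by simp) f (by simp)

lemma d2_eq (G : Multigraph) {C : Type} [Fintype C] (cl : G.E → C)
    (h : ∀ e f, e ≠ f → (cl e = cl f ↔ G.Disconnects {e, f})) :
    G.d 2 = ∑ c, (cls cl c).choose 2 := by
  refine le_antisymm ?_ (G.d2_ge cl (fun e f hef h' => (h e f hef).1 h'))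
  rw [← card_monoPairs]
  apply card_le_card
  intro F hF
  simp only [monoPairs, mem_filter, mem_univ, true_and] at hF ⊢
  obtain ⟨h2, hF⟩ := hF
  refine ⟨h2, ?_⟩
  obtain ⟨e, f, hef, rfl⟩ := card_eq_two.1 h2
  have := (h e f hef).2 hF
  intro a ha b hb
  simp at ha hb
  rcases ha with rfl | rfl <;> rcases hb with rfl | rfl <;> simp [this]

def rmap {V : Type} (x y : V) (hyx : y ≠ x) (v : V) : {v : V // v ≠ x} :=
  if h : v = x then ⟨y, hyx⟩ else ⟨v, h⟩

/-- contraction of an edge, removing the vertex `x` -/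
abbrev ctr (G : Multigraph) (e : G.E) (x y : G.V) (hyx : y ≠ x) : Multigraph where
  V := {v : G.V // v ≠ x}
  E := {f : G.E // f ≠ e}
  src f := rmap x y hyx (G.src f.1)
  tgt f := rmap x y hyx (G.tgt f.1)

def Joins (G : Multigraph) (e : G.E) (x y : G.V) : Prop :=
  (G.src e = x ∧ G.tgt e = y) ∨ (G.src e = y ∧ G.tgt e = x)

lemma ctr_cardV (G : Multigraph) (e : G.E) (x y : G.V) (hyx : y ≠ x) :
    Fintype.card (G.ctr e x y hyx).V + 1 = Fintype.card G.V := by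
  have : Fintype.card {v : G.V // v ≠ x} = Fintype.card G.V - 1 := by
    rw [Fintype.card_subtype_compl, Fintype.card_subtype_eq]
  have h1 : 0 < Fintype.card G.V := Fintype.card_pos_iff.2 ⟨x⟩
  have h2 : Fintype.card (G.ctr e x y hyx).V = Fintype.card {v : G.V // v ≠ x} := by
    congr
  omega

lemma ctr_cardE (G : Multigraph) (e : G.E) (x y : G.V) (hyx : y ≠ x) :
    Fintype.card (G.ctr e x y hyx).E + 1 = Fintype.card G.E := by
  have : Fintype.card {v : G.E // v ≠ e} = Fintype.card G.E - 1 := by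
    rw [Fintype.card_subtype_compl, Fintype.card_subtype_eq]
  have h1 : 0 < Fintype.card G.E := Fintype.card_pos_iff.2 ⟨e⟩
  have h2 : Fintype.card (G.ctr e x y hyx).E = Fintype.card {v : G.E // v ≠ e} := by
    congr
  omega

lemma ctr_disc (G : Multigraph) (e : G.E) (x y : G.V) (hyx : y ≠ x) (hj : G.Joins e x y)
    (F : Finset (G.ctr e x y hyx).E) :
    (G.ctr e x y hyx).Disconnects F ↔ G.Disconnects (F.map (Function.Embedding.subtype _)) := by
  have hr : ∀ (v : G.V) (hv : v ≠ x), rmap x y hyx v = ⟨v, hv⟩ := by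
    intro v hv
    simp [rmap, hv]
  have hrx : rmap x y hyx x = ⟨y, hyx⟩ := by simp [rmap]
  have hF : ∀ (f : G.E) (hf : f ≠ e), f ∉ F.map (Function.Embedding.subtype _) ↔
      (⟨f, hf⟩ : {f : G.E // f ≠ e}) ∉ F := by
    intro f hf
    simp [hf]
  have hFe : e ∉ F.map (Function.Embedding.subtype _) := by simp
  rw [disc_iff, disc_iff]
  constructor
  · rintro ⟨A, ⟨a, ha⟩, ⟨b, hb⟩, hA⟩
    refine ⟨{v | rmap x y hyx v ∈ A}, ⟨a.1, ?_⟩, ⟨b.1, ?_⟩, ?_⟩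
    · show rmap x y hyx a.1 ∈ A
      rw [hr a.1 a.2]; exact ha
    · show rmap x y hyx b.1 ∉ A
      rw [hr b.1 b.2]; exact hb
    · intro f hf
      by_cases hfe : f = e
      · subst hfe
        show rmap x y hyx _ ∈ A ↔ rmap x y hyx _ ∈ A
        rcases hj with ⟨h1, h2⟩ | ⟨h1, h2⟩
        · rw [h1, h2, hrx, hr y hyx]
        · rw [h1, h2, hrx, hr y hyx]
      · exact hA ⟨f, hfe⟩ ((hF f hfe).1 hf)
  · rintro ⟨A, ⟨a, ha⟩, ⟨b, hb⟩, hA⟩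
    have hxy : x ∈ A ↔ y ∈ A := by
      have := hA e hFe
      rcases hj with ⟨h1, h2⟩ | ⟨h1, h2⟩
      · rw [h1, h2] at this; exact this
      · rw [h1, h2] at this; exact this.symm
    have hrA : ∀ v, (rmap x y hyx v).1 ∈ A ↔ v ∈ A := by
      intro v
      by_cases h : v = x
      · subst h; rw [hrx]; exact hxy.symm
      · rw [hr v h]
    refine ⟨{v | v.1 ∈ A}, ⟨rmap x y hyx a, (hrA a).2 ha⟩,
      ⟨rmap x y hyx b, fun h => hb ((hrA b).1 h)⟩, ?_⟩
    rintro ⟨f, hfe⟩ hf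
    have := hA f ((hF f hfe).2 hf)
    show (rmap x y hyx _).1 ∈ A ↔ (rmap x y hyx _).1 ∈ A
    rw [hrA, hrA]; exact this

def Dp (G : Multigraph) (e f : G.E) : Prop := G.Disconnects {e, f}

lemma ctr_pair (G : Multigraph) (e : G.E) (x y : G.V) (hyx : y ≠ x) (hj : G.Joins e x y)
    (f g : G.E) (hf : f ≠ e) (hg : g ≠ e) :
    (G.ctr e x y hyx).Dp ⟨f, hf⟩ ⟨g, hg⟩ ↔ G.Disconnects {f, g} := by
  unfold Dp
  rw [ctr_disc G e x y hyx hj]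
  have : ({f, g} : Finset G.E) = (Finset.map (Function.Embedding.subtype _)
      (insert ⟨f, hf⟩ {⟨g, hg⟩} : Finset (G.ctr e x y hyx).E)) := by
    ext z
    simp [eq_comm]
  rw [this]
  refine Iff.of_eq ?_
  congr!

lemma ctr_single (G : Multigraph) (e : G.E) (x y : G.V) (hyx : y ≠ x) (hj : G.Joins e x y)
    (f : G.E) (hf : f ≠ e) :
    (G.ctr e x y hyx).Disconnects {⟨f, hf⟩} ↔ G.Disconnects {f} := by
  rw [ctr_disc G e x y hyx hj, map_singleton]
  rfl

lemma ctr_conn (G : Multigraph) (e : G.E) (x y : G.V) (hyx : y ≠ x) (hj : G.Joins e x y)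
    (h : G.Connected) : (G.ctr e x y hyx).Connected := by
  rw [connected_iff] at h ⊢
  rw [ctr_disc G e x y hyx hj]
  simpa using h

lemma disc_loop (G : Multigraph) (e : G.E) (he : G.src e = G.tgt e) (F : Finset G.E)
    (h : G.Disconnects (insert e F)) : G.Disconnects F := by
  rw [disc_iff] at *
  obtain ⟨A, h1, h2, h3⟩ := h
  refine ⟨A, h1, h2, fun f hf => ?_⟩
  by_cases hfe : f = e
  · subst hfe; rw [he]
  · exact h3 f (by simp [hfe, hf])

lemma tec_of_pairs (G : Multigraph) (h : ∀ e f, e ≠ f → ¬ G.Disconnects {e, f})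
    (h2 : 2 ≤ Fintype.card G.E) : G.TEC := by
  intro F hF
  by_contra hlt
  obtain ⟨F', h3, h4⟩ := exists_superset_card_eq (s := F) (n := 2) (by omega) (by simpa using h2)
  obtain ⟨e, f, hef, rfl⟩ := card_eq_two.1 h4
  exact h e f hef (G.disc_mono h3 hF)

lemma exists_coloring (k : ℕ) (hk : 1 ≤ k) (m : ℕ) : ∀ G : Multigraph, Fintype.card G.E = m →
    G.Connected → Fintype.card G.E = Fintype.card G.V + k → 1 ≤ Fintype.card G.V →
    ∃ cl : G.E → Fin (3 * k), ∀ e f, e ≠ f → cl e = cl f → G.Disconnects {e, f} := by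
  induction m with
  | zero => intro G h1 _ h2 h3; omega
  | succ m ih =>
    intro G hm hc hk' hV
    by_cases hp : ∃ e f, e ≠ f ∧ G.Disconnects {e, f}
    · have hp' : ∃ e f, e ≠ f ∧ G.Disconnects {e, f} ∧ (G.Disconnects {e} ∨ ¬ G.Disconnects {f}) := by
        obtain ⟨e, f, hef, hd⟩ := hp
        by_cases h1 : G.Disconnects {e}
        · exact ⟨e, f, hef, hd, Or.inl h1⟩
        by_cases h2 : G.Disconnects {f}
        · exact ⟨f, e, hef.symm, by rwa [pair_comm], Or.inl h2⟩
        · exact ⟨e, f, hef, hd, Or.inr h2⟩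
      obtain ⟨e, f, hef, hd, hor⟩ := hp'
      have hnl : G.tgt e ≠ G.src e := by
        intro hl
        rcases hor with h | h
        · exact (connected_iff G).1 hc (G.disc_loop e hl.symm ∅ (by simpa using h))
        · exact h (G.disc_loop e hl.symm {f} hd)
      have hj : G.Joins e (G.src e) (G.tgt e) := Or.inl ⟨rfl, rfl⟩
      have cE := G.ctr_cardE e _ _ hnl
      have cV := G.ctr_cardV e _ _ hnl
      have hV2 : 2 ≤ Fintype.card G.V := Fintype.one_lt_card_iff.2 ⟨_, _, hnl⟩
      obtain ⟨cl, hcl⟩ := ih (G.ctr e _ _ hnl) (by omega) (G.ctr_conn e _ _ hnl hj hc) (by omega)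
        (by omega)
      have hkey : ∀ g, e ≠ g → (∀ hg : g ≠ e, cl ⟨f, hef.symm⟩ = cl ⟨g, hg⟩ → G.Disconnects {e, g}) := by
        intro g heg hg h
        rcases hor with h' | h'
        · exact G.disc_mono (by simp) h'
        · by_cases hfg : f = g
          · rw [← hfg]; exact hd
          · refine G.series_trans hef heg h' hd ?_
            rw [← G.ctr_pair e _ _ hnl hj f g hef.symm hg]
            exact hcl _ _ (by simpa using hfg) h
      refine ⟨fun g => if h : g = e then cl ⟨f, hef.symm⟩ else cl ⟨g, h⟩, ?_⟩
      intro a b hab h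
      by_cases ha : a = e <;> by_cases hb : b = e
      · exact absurd (ha.trans hb.symm) hab
      · subst ha
        simp only [dif_pos, dif_neg hb] at h
        exact hkey b hab hb h
      · subst hb
        simp only [dif_pos, dif_neg ha] at h
        rw [pair_comm]
        exact hkey a hab.symm ha h.symm
      · simp only [dif_neg ha, dif_neg hb] at h
        rw [← G.ctr_pair e _ _ hnl hj a b ha hb]
        exact hcl _ _ (by simpa using hab) h
    · push Not at hp
      have ht := G.tec_of_pairs hp (by omega)
      have := ht.card_le hk hk'
      obtain ⟨ι⟩ : Nonempty (G.E ↪ Fin (3 * k)) :=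
        Function.Embedding.nonempty_of_card_le (by rw [Fintype.card_fin]; omega)
      refine ⟨ι, fun e f hef h => absurd (ι.injective h) hef⟩

end Multigraph


namespace Multigraph

abbrev subd (D : Multigraph) (w : D.E → ℕ) : Multigraph where
  V := Quot (zeroRel D w) ⊕ (Σ f : D.E, Fin (w f - 1))
  E := Σ f : D.E, Fin (w f)
  src f := chainNode D w f.1 f.2.val
  tgt f := chainNode D w f.1 (f.2.val + 1)

lemma subd_eq (D : Multigraph) (w : D.E → ℕ) : subdivide D w = subd D w := rfl

lemma node_zero (D : Multigraph) (w : D.E → ℕ) (f : D.E) :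
    chainNode D w f 0 = Sum.inl (Quot.mk _ (D.src f)) := by
  simp [chainNode]

lemma node_last (D : Multigraph) (w : D.E → ℕ) (f : D.E) :
    chainNode D w f (w f) = Sum.inl (Quot.mk _ (D.tgt f)) := by
  by_cases h : w f = 0
  · rw [h, node_zero]
    congr 1
    exact Quot.sound ⟨f, h, rfl, rfl⟩
  · simp [chainNode, h]

lemma node_mid (D : Multigraph) (w : D.E → ℕ) (f : D.E) (i : Fin (w f - 1)) :
    chainNode D w f (i.1 + 1) = Sum.inr ⟨f, i⟩ := by
  have : 0 < i.1 + 1 ∧ i.1 + 1 < w f := ⟨by omega, by have := i.2; omega⟩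
  simp only [chainNode, dif_pos this]
  simp

lemma chain_prop {α : Type} (A : Set α) (nd : ℕ → α) (a b : ℕ) (hab : a ≤ b)
    (h : ∀ j, a ≤ j → j < b → (nd j ∈ A ↔ nd (j + 1) ∈ A)) : nd a ∈ A ↔ nd b ∈ A := by
  induction b, hab using Nat.le_induction with
  | base => rfl
  | succ b hb ih =>
    rw [ih (fun j h1 h2 => h j h1 (by omega))]
    exact h b hb (by omega)

lemma subd_not_disc (D : Multigraph) (w : D.E → ℕ) (hD : D.TEC) (F : Finset (subd D w).E)
    (hF : ∀ p ∈ F, ∀ p' ∈ F, p.1 = p'.1 → p = p') (h2 : F.card ≤ 2) :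
    ¬ (subd D w).Disconnects F := by
  intro hd
  rw [disc_iff] at hd
  obtain ⟨A, ⟨a, ha⟩, ⟨b, hb⟩, hA⟩ := hd
  have hedge : ∀ (f : D.E) (j : ℕ) (hj : j < w f), (⟨f, ⟨j, hj⟩⟩ : (subd D w).E) ∉ F →
      (chainNode D w f j ∈ A ↔ chainNode D w f (j + 1) ∈ A) := by
    intro f j hj hf
    exact hA ⟨f, ⟨j, hj⟩⟩ hf
  let B : Set D.V := {v | (Sum.inl (Quot.mk _ v) : (subd D w).V) ∈ A}
  have hB : ∀ u v, u ∈ B → v ∈ B := by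
    by_contra hcon
    push Not at hcon
    obtain ⟨u, v, hu, hv⟩ := hcon
    have : D.Disconnects (F.image Sigma.fst) := by
      rw [disc_iff]
      refine ⟨B, ⟨u, hu⟩, ⟨v, hv⟩, fun f hf => ?_⟩
      have := chain_prop A (chainNode D w f) 0 (w f) (Nat.zero_le _) (by
        intro j _ hj
        apply hedge f j hj
        intro hmem
        exact hf (mem_image.2 ⟨_, hmem, rfl⟩))
      rw [node_zero, node_last] at this
      exact this
    have h3 := hD _ this
    have h4 := card_image_le (s := F) (f := Sigma.fst)
    omega
  have hmid : ∀ x, x ∈ A → ∃ v, v ∈ B := by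
    intro x hx
    rcases x with x | ⟨f, i⟩
    · obtain ⟨v, rfl⟩ := Quot.exists_rep x
      exact ⟨v, hx⟩
    · rw [← node_mid] at hx
      have hi := i.2
      by_cases hl : ∃ j : ℕ, ∃ hj : j < w f, j ≤ i.1 ∧ (⟨f, ⟨j, hj⟩⟩ : (subd D w).E) ∈ F
      · obtain ⟨j, hj, hji, hjF⟩ := hl
        have := chain_prop A (chainNode D w f) (i.1 + 1) (w f) (by omega) (by
          intro j' h1 hj'
          apply hedge f j' hj'
          intro hmem
          have := hF _ hmem _ hjF rfl
          simp at this
          omega)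
        rw [node_last] at this
        exact ⟨_, this.1 hx⟩
      · push Not at hl
        have := chain_prop A (chainNode D w f) 0 (i.1 + 1) (by omega) (by
          intro j' h1 hj'
          exact hedge f j' (by omega) (hl j' (by omega) (by omega)))
        rw [node_zero] at this
        exact ⟨_, this.2 hx⟩
  have hmid' : ∀ x, x ∉ A → ∃ v, v ∉ B := by
    intro x hx
    rcases x with x | ⟨f, i⟩
    · obtain ⟨v, rfl⟩ := Quot.exists_rep x
      exact ⟨v, hx⟩
    · rw [← node_mid] at hx
      have hi := i.2
      by_cases hl : ∃ j : ℕ, ∃ hj : j < w f, j ≤ i.1 ∧ (⟨f, ⟨j, hj⟩⟩ : (subd D w).E) ∈ F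
      · obtain ⟨j, hj, hji, hjF⟩ := hl
        have := chain_prop A (chainNode D w f) (i.1 + 1) (w f) (by omega) (by
          intro j' h1 hj'
          apply hedge f j' hj'
          intro hmem
          have := hF _ hmem _ hjF rfl
          simp at this
          omega)
        rw [node_last] at this
        exact ⟨_, fun h => hx (this.2 h)⟩
      · push Not at hl
        have := chain_prop A (chainNode D w f) 0 (i.1 + 1) (by omega) (by
          intro j' h1 hj'
          exact hedge f j' (by omega) (hl j' (by omega) (by omega)))
        rw [node_zero] at this
        exact ⟨_, fun h => hx (this.1 h)⟩
  obtain ⟨u, hu⟩ := hmid a ha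
  obtain ⟨v, hv⟩ := hmid' b hb
  exact hv (hB u v hu)

lemma node_inj (D : Multigraph) (w : D.E → ℕ) (f g : D.E) (s t : ℕ) (h0 : 0 < t) (ht : t < w f)
    (h : chainNode D w g s = chainNode D w f t) : g = f ∧ s = t := by
  have h1 : chainNode D w f t = Sum.inr ⟨f, ⟨t - 1, by omega⟩⟩ := by
    simp only [chainNode, dif_pos (And.intro h0 ht)]
  rw [h1] at h
  by_cases hs : 0 < s ∧ s < w g
  · simp only [chainNode, dif_pos hs] at h
    have h2 := Sum.inr.inj h
    obtain ⟨h3, h4⟩ := Sigma.mk.inj h2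
    subst h3
    have h5 : s - 1 = t - 1 := congrArg Fin.val (eq_of_heq h4)
    exact ⟨rfl, by omega⟩
  · simp only [chainNode, dif_neg hs] at h
    split_ifs at h

lemma subd_disc (D : Multigraph) (w : D.E → ℕ) (hV : Nonempty D.V) (f : D.E) (i j : Fin (w f))
    (hij : i.1 < j.1) (F : Finset (subd D w).E)
    (hi : (⟨f, i⟩ : (subd D w).E) ∈ F) (hj : (⟨f, j⟩ : (subd D w).E) ∈ F) :
    (subd D w).Disconnects F := by
  rw [disc_iff]
  have hjw := j.2
  have key : ∀ g s, chainNode D w g s ∈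
      {x | ∃ t, i.1 < t ∧ t ≤ j.1 ∧ x = chainNode D w f t} ↔ g = f ∧ i.1 < s ∧ s ≤ j.1 := by
    intro g s
    constructor
    · rintro ⟨t, h1, h2, h3⟩
      obtain ⟨rfl, rfl⟩ := node_inj D w f g s t (by omega) (by omega) h3
      exact ⟨rfl, h1, h2⟩
    · rintro ⟨rfl, h1, h2⟩
      exact ⟨s, h1, h2, rfl⟩
  refine ⟨{x | ∃ t, i.1 < t ∧ t ≤ j.1 ∧ x = chainNode D w f t}, ⟨chainNode D w f j.1, j.1, hij, le_rfl, rfl⟩, ?_, ?_⟩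
  · refine ⟨chainNode D w f 0, ?_⟩
    rw [Set.mem_compl_iff, key]
    omega
  · rintro ⟨g, s⟩ hs
    rw [key, key]
    by_cases hg : g = f
    · subst hg
      have h1 : s.1 ≠ i.1 := by
        intro h
        have : s = i := Fin.ext h
        exact hs (this ▸ hi)
      have h2 : s.1 ≠ j.1 := by
        intro h
        have : s = j := Fin.ext h
        exact hs (this ▸ hj)
      simp only [true_and]
      omega
    · simp [hg]

lemma subd_conn (D : Multigraph) (w : D.E → ℕ) (hD : D.TEC) : (subd D w).Connected := by
  rw [connected_iff]
  exact subd_not_disc D w hD ∅ (by simp) (by simp)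

lemma pair_spec (G : Multigraph) (e f : G.E) (h : G.Disconnects {e, f}) :
    ∃ F : Finset G.E, (∀ p ∈ F, p = e ∨ p = f) ∧ F.card ≤ 2 ∧ G.Disconnects F :=
  ⟨{e, f}, by simp, card_le_two, h⟩

lemma subd_d2 (D : Multigraph) (w : D.E → ℕ) (hD : D.TEC) (hV : Nonempty D.V) :
    (subd D w).d 2 = ∑ f, (w f).choose 2 := by
  rw [d2_eq (subd D w) (C := D.E) Sigma.fst]
  · apply sum_congr rfl
    intro f _
    congr 1
    unfold cls
    rw [card_filter, Fintype.sum_sigma, Finset.sum_eq_single f]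
    · simp
    · intro g _ hg
      simp [hg]
    · simp
  · rintro ⟨f, i⟩ ⟨g, j⟩ hne
    constructor
    · intro h
      simp only at h
      subst h
      have hij : i ≠ j := by rintro rfl; exact hne rfl
      rcases lt_or_gt_of_ne (fun h => hij (Fin.ext h) : i.1 ≠ j.1) with h | h
      · exact subd_disc D w hV f i j h _ (by simp) (by simp)
      · exact subd_disc D w hV f j i h _ (by simp) (by simp)
    · intro h
      by_contra hfg
      obtain ⟨F, hF, hc, hd⟩ := pair_spec _ _ _ h
      refine subd_not_disc D w hD F ?_ hc hd
      intro p hp p' hp' hpp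
      replace hp := hF p hp
      replace hp' := hF p' hp'
      rcases hp with rfl | rfl <;> rcases hp' with rfl | rfl
      · rfl
      · exact absurd hpp hfg
      · exact absurd hpp.symm hfg
      · rfl

lemma subd_cardE (D : Multigraph) (w : D.E → ℕ) : Fintype.card (subd D w).E = ∑ f, w f := by
  show Fintype.card (Σ f : D.E, Fin (w f)) = _
  simp

lemma subd_cardV (D : Multigraph) (w : D.E → ℕ) :
    Fintype.card (subd D w).V = Fintype.card (Quot (zeroRel D w)) + ∑ f, (w f - 1) := by
  show Fintype.card (Quot (zeroRel D w) ⊕ (Σ f : D.E, Fin (w f - 1))) = _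
  simp

lemma subd_cardV' (D : Multigraph) (w : D.E → ℕ) (hz : ZeroAcyclic D w) :
    Fintype.card (subd D w).V + Fintype.card D.E = Fintype.card D.V + Fintype.card (subd D w).E := by
  rw [subd_cardV, subd_cardE, ← hz]
  have h : ∑ f, (w f - 1) + Fintype.card D.E = (univ.filter fun e : D.E => w e = 0).card + ∑ f, w f := by
    rw [card_filter, ← card_univ, card_eq_sum_ones, ← sum_add_distrib, ← sum_add_distrib]
    apply sum_congr rfl
    intro f _
    split_ifs <;> omega
  omega

lemma iso_disc {G H : Multigraph} (φ : MGIso G H) (F : Finset G.E) :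
    G.Disconnects F ↔ H.Disconnects (F.map φ.eMap.toEmbedding) := by
  rw [disc_iff, disc_iff]
  constructor
  · rintro ⟨A, ⟨a, ha⟩, ⟨b, hb⟩, hA⟩
    refine ⟨{v | φ.vMap.symm v ∈ A}, ⟨φ.vMap a, by simpa using ha⟩, ⟨φ.vMap b, by simpa using hb⟩, ?_⟩
    intro e he
    obtain ⟨e, rfl⟩ := φ.eMap.surjective e
    have := hA e (fun h => he (by simpa using h))
    rcases φ.ends_eq e with ⟨h1, h2⟩ | ⟨h1, h2⟩
    · simp [h1, h2, this]
    · simp [h1, h2, this]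
  · rintro ⟨A, ⟨a, ha⟩, ⟨b, hb⟩, hA⟩
    refine ⟨{v | φ.vMap v ∈ A}, ⟨φ.vMap.symm a, by simpa using ha⟩, ⟨φ.vMap.symm b, by simpa using hb⟩, ?_⟩
    intro e he
    have := hA (φ.eMap e) (by simpa using he)
    rcases φ.ends_eq e with ⟨h1, h2⟩ | ⟨h1, h2⟩
    · rw [h1, h2] at this; exact this
    · rw [h1, h2] at this; exact this.symm

lemma iso_d {G H : Multigraph} (φ : MGIso G H) (i : ℕ) : G.d i = H.d i := by
  unfold d
  apply card_equiv φ.eMap.finsetCongr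
  intro F
  simp only [mem_filter, mem_univ, true_and, Equiv.finsetCongr_apply, card_map]
  rw [iso_disc φ]

end Multigraph


namespace Multigraph

structure GD (G D : Multigraph) (w : D.E → ℕ) where
  ε : G.E → D.E
  pos : G.E → ℕ
  q : D.V → G.V
  nd : D.E → ℕ → G.V
  lt : ∀ x, pos x < w (ε x)
  inj : ∀ x y, ε x = ε y → pos x = pos y → x = y
  nd0 : ∀ f, nd f 0 = q (D.src f)
  nd1 : ∀ f, nd f (w f) = q (D.tgt f)
  ends : ∀ x, (G.src x = nd (ε x) (pos x) ∧ G.tgt x = nd (ε x) (pos x + 1)) ∨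
    (G.tgt x = nd (ε x) (pos x) ∧ G.src x = nd (ε x) (pos x + 1))

def vtx {G D : Multigraph} {w : D.E → ℕ} (h : GD G D w) : (subd D w).V → G.V
  | Sum.inl x => Quot.lift h.q (by
      rintro u v ⟨f, hf, rfl, rfl⟩
      rw [← h.nd0, ← h.nd1, hf]) x
  | Sum.inr x => h.nd x.1 (x.2.1 + 1)

lemma vtx_node {G D : Multigraph} {w : D.E → ℕ} (h : GD G D w) (f : D.E) (j : ℕ) (hj : j ≤ w f) :
    vtx h (chainNode D w f j) = h.nd f j := by
  rcases Nat.eq_zero_or_pos j with rfl | h0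
  · rw [node_zero, h.nd0]; rfl
  · rcases Nat.lt_or_ge j (w f) with h1 | h1
    · have := node_mid D w f ⟨j - 1, by omega⟩
      simp only at this
      rw [show j - 1 + 1 = j by omega] at this
      rw [this]
      simp only [vtx]
      rw [show j - 1 + 1 = j by omega]
    · obtain rfl : j = w f := by omega
      rw [node_last, h.nd1]; rfl

lemma crit {G D : Multigraph} {w : D.E → ℕ} {k : ℕ} (h : GD G D w) (hz : ZeroAcyclic D w)
    (hD : Fintype.card D.E = Fintype.card D.V + k) (hG : Fintype.card G.E = Fintype.card G.V + k)
    (hw : ∑ f, w f = Fintype.card G.E)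
    (hinc : ∀ v, ∃ x, G.src x = v ∨ G.tgt x = v) : IsIso G (subdivide D w) := by
  rw [subd_eq]
  have hcE : Fintype.card G.E = Fintype.card (subd D w).E := by rw [subd_cardE, hw]
  have hcV := subd_cardV' D w hz
  let η : G.E → (subd D w).E := fun x => ⟨h.ε x, ⟨h.pos x, h.lt x⟩⟩
  have hη : Function.Bijective η := by
    rw [Fintype.bijective_iff_injective_and_card]
    refine ⟨?_, hcE⟩
    intro x y hxy
    have h1 : h.ε x = h.ε y := congrArg Sigma.fst hxy
    have h2 : h.pos x = h.pos y := congrArg (fun p : (subd D w).E => p.2.1) hxy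
    exact h.inj x y h1 h2
  have hψ : Function.Bijective (vtx h) := by
    rw [Fintype.bijective_iff_surjective_and_card]
    refine ⟨?_, by omega⟩
    intro v
    obtain ⟨x, hx⟩ := hinc v
    have h1 := vtx_node h (h.ε x) (h.pos x) (h.lt x).le
    have h2 := vtx_node h (h.ε x) (h.pos x + 1) (h.lt x)
    rcases h.ends x with ⟨h3, h4⟩ | ⟨h3, h4⟩ <;> rcases hx with hx | hx
    · exact ⟨_, by rw [h1, ← h3, hx]⟩
    · exact ⟨_, by rw [h2, ← h4, hx]⟩
    · exact ⟨_, by rw [h2, ← h4, hx]⟩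
    · exact ⟨_, by rw [h1, ← h3, hx]⟩
  refine ⟨⟨(Equiv.ofBijective _ hψ).symm, Equiv.ofBijective _ hη, ?_⟩⟩
  intro x
  have h1 := vtx_node h (h.ε x) (h.pos x) (h.lt x).le
  have h2 := vtx_node h (h.ε x) (h.pos x + 1) (h.lt x)
  rcases h.ends x with ⟨h3, h4⟩ | ⟨h3, h4⟩
  · left
    constructor
    · rw [Equiv.eq_symm_apply, h3, ← h1]; rfl
    · rw [Equiv.eq_symm_apply, h4, ← h2]; rfl
  · right
    constructor
    · rw [Equiv.eq_symm_apply, h3, ← h1]; rfl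
    · rw [Equiv.eq_symm_apply, h4, ← h2]; rfl

lemma conn_inc {G : Multigraph} (hc : G.Connected) (he : Nonempty G.E) (v : G.V) :
    ∃ x, G.src x = v ∨ G.tgt x = v := by
  by_contra hcon
  push Not at hcon
  rw [connected_iff, disc_iff] at hc
  apply hc
  obtain ⟨e⟩ := he
  refine ⟨{v}, ⟨v, rfl⟩, ⟨G.src e, (hcon e).1⟩, fun x _ => ?_⟩
  simp [(hcon x).1, (hcon x).2]

/-- zero classes are trivial for positive weights -/
lemma zero_pos {D : Multigraph} {w : D.E → ℕ} (hw : ∀ f, 1 ≤ w f) : ZeroAcyclic D w := by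
  unfold ZeroAcyclic
  have h1 : (univ.filter fun e : D.E => w e = 0) = ∅ := by
    apply filter_eq_empty_iff.2
    intro f _
    have := hw f
    omega
  rw [h1, card_empty, add_zero]
  symm
  apply Fintype.card_of_bijective (f := Quot.mk (zeroRel D w))
  refine ⟨?_, Quot.exists_rep⟩
  intro u v huv
  have := congrArg (Quot.lift (β := D.V) id (by
    rintro a b ⟨f, hf, _, _⟩
    have := hw f
    omega)) huv
  exact this

lemma exp_case {D G : Multigraph} {k : ℕ} (hE : Exp D G)
    (hD : Fintype.card D.E = Fintype.card D.V + k) (hG : Fintype.card G.E = Fintype.card G.V + k)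
    (hc : G.Connected) (hne : Nonempty G.E) :
    ∃ w : D.E → ℕ, IsWeakSubdivision G D w ∧ BalancedWeights w := by
  obtain ⟨q, ι, hq, hι, hends, hloop, hT⟩ := hE
  let w : D.E → ℕ := fun f => if f ∈ Set.range ι then 1 else 0
  have hw0 : ∀ f, w f = 0 ↔ f ∉ Set.range ι := by
    intro f
    by_cases hf : f ∈ Set.range ι <;> simp only [w, hf] <;> simp
  have hw1 : ∀ x, w (ι x) = 1 := fun x => by
    simp only [w]; rw [if_pos ⟨x, rfl⟩]
  have hsum : ∑ f, w f = Fintype.card G.E := by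
    simp only [w]
    rw [← card_filter, ← card_univ (α := G.E), ← card_image_of_injective univ hι]
    congr 1
    ext f
    simp
  have hz : ZeroAcyclic D w := by
    unfold ZeroAcyclic
    have hb : Fintype.card (Quot (zeroRel D w)) = Fintype.card G.V := by
      apply Fintype.card_of_bijective (f := Quot.lift q (by
        rintro a b ⟨f, hf, rfl, rfl⟩
        exact hloop f ((hw0 f).1 hf)))
      constructor
      · intro a b
        obtain ⟨u, rfl⟩ := Quot.exists_rep a
        obtain ⟨v, rfl⟩ := Quot.exists_rep b
        intro huv
        have := hT u v huv {x | Quot.mk (zeroRel D w) x = Quot.mk (zeroRel D w) u} (by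
          intro e he
          have : Quot.mk (zeroRel D w) (D.src e) = Quot.mk (zeroRel D w) (D.tgt e) :=
            Quot.sound ⟨e, (hw0 e).2 he, rfl, rfl⟩
          simp only [Set.mem_setOf_eq, this])
        exact (this.1 rfl).symm
      · intro v
        obtain ⟨u, rfl⟩ := hq v
        exact ⟨Quot.mk _ u, rfl⟩
    have hs : (univ.filter fun e : D.E => w e = 0).card + ∑ f, w f = Fintype.card D.E := by
      rw [card_filter, ← sum_add_distrib, ← card_univ, card_eq_sum_ones]
      apply sum_congr rfl
      intro f _
      simp only [w]
      split_ifs <;> simp_all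
    omega
  refine ⟨w, ⟨hz, ?_⟩, ?_⟩
  · refine crit (k := k) (w := w) ⟨ι, fun _ => 0, q, fun f j => if j = 0 then q (D.src f) else q (D.tgt f),
      ?_, ?_, ?_, ?_, ?_⟩ hz hD hG hsum (conn_inc hc hne)
    · intro x; rw [hw1]; omega
    · intro x y hxy _; exact hι hxy
    · intro f; simp
    · intro f
      by_cases hf : w f = 0
      · simp only [hf]
        simp only [if_true]
        exact hloop f ((hw0 f).1 hf)
      · simp only [hf]; simp
    · intro x
      left
      simp [hends]
  · intro e f
    simp only [w]
    split_ifs <;> omega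

end Multigraph


namespace Multigraph

lemma Joins.symm {G : Multigraph} {e : G.E} {x y : G.V} (h : G.Joins e x y) : G.Joins e y x := by
  unfold Joins at *; tauto

lemma GD.joins {G D : Multigraph} {w : D.E → ℕ} (h : GD G D w) (x : G.E) :
    G.Joins x (h.nd (h.ε x) (h.pos x)) (h.nd (h.ε x) (h.pos x + 1)) := by
  have := h.ends x
  unfold Joins; tauto

lemma gd_ext {G D : Multigraph} {w : D.E → ℕ} (e f : G.E) (x y z : G.V) (hyx : y ≠ x) (hzx : z ≠ x)
    (hfe : f ≠ e) (hje : G.Joins e x y) (hjf : G.Joins f x z)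
    (hoth : ∀ a, a ≠ e → a ≠ f → G.src a ≠ x ∧ G.tgt a ≠ x)
    (h : GD (G.ctr e x y hyx) D w) :
    Nonempty (GD G D (fun c => if c = h.ε ⟨f, hfe⟩ then w c + 1 else w c)) := by
  have hr : ∀ (v : G.V) (hv : v ≠ x), (rmap x y hyx v).1 = v := by
    intro v hv
    simp [rmap, hv]
  have hrx : (rmap x y hyx x).1 = y := by simp [rmap]
  have hJ : ∀ a : (G.ctr e x y hyx).E, ∀ u v, (G.ctr e x y hyx).Joins a u v →
      ((rmap x y hyx (G.src a.1)).1 = u.1 ∧ (rmap x y hyx (G.tgt a.1)).1 = v.1) ∨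
      ((rmap x y hyx (G.src a.1)).1 = v.1 ∧ (rmap x y hyx (G.tgt a.1)).1 = u.1) := by
    intro a u v hj
    rcases hj with ⟨h1, h2⟩ | ⟨h1, h2⟩
    · left; exact ⟨congrArg Subtype.val h1, congrArg Subtype.val h2⟩
    · right; exact ⟨congrArg Subtype.val h1, congrArg Subtype.val h2⟩
  have hA : ∀ a (hae : a ≠ e), a ≠ f → G.Joins a (h.nd (h.ε ⟨a, hae⟩) (h.pos ⟨a, hae⟩)).1
      (h.nd (h.ε ⟨a, hae⟩) (h.pos ⟨a, hae⟩ + 1)).1 := by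
    intro a hae haf
    have h1 := hJ _ _ _ (h.joins ⟨a, hae⟩)
    have h2 := hoth a hae haf
    rw [hr _ h2.1, hr _ h2.2] at h1
    exact h1
  have hF : ((h.nd (h.ε ⟨f, hfe⟩) (h.pos ⟨f, hfe⟩)).1 = y ∧
      (h.nd (h.ε ⟨f, hfe⟩) (h.pos ⟨f, hfe⟩ + 1)).1 = z) ∨
      ((h.nd (h.ε ⟨f, hfe⟩) (h.pos ⟨f, hfe⟩)).1 = z ∧
      (h.nd (h.ε ⟨f, hfe⟩) (h.pos ⟨f, hfe⟩ + 1)).1 = y) := by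
    have h1 := hJ _ _ _ (h.joins ⟨f, hfe⟩)
    rcases hjf with ⟨h2, h3⟩ | ⟨h2, h3⟩
    · simp only [h2, h3, hrx, hr z hzx] at h1
      rcases h1 with ⟨h4, h5⟩ | ⟨h4, h5⟩
      · left; exact ⟨h4.symm, h5.symm⟩
      · right; exact ⟨h5.symm, h4.symm⟩
    · simp only [h2, h3, hrx, hr z hzx] at h1
      rcases h1 with ⟨h4, h5⟩ | ⟨h4, h5⟩
      · right; exact ⟨h4.symm, h5.symm⟩
      · left; exact ⟨h5.symm, h4.symm⟩
  have hlt := h.lt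
  have hinj := h.inj
  have hlf := h.lt ⟨f, hfe⟩
  have hinjf : ∀ a (hae : a ≠ e), a ≠ f → h.ε ⟨a, hae⟩ = h.ε ⟨f, hfe⟩ → h.pos ⟨a, hae⟩ ≠ h.pos ⟨f, hfe⟩ := by
    intro a hae haf h1 h2
    exact haf (congrArg Subtype.val (h.inj _ _ h1 h2))
  obtain ⟨g, hg⟩ : ∃ g, g = h.ε ⟨f, hfe⟩ := ⟨_, rfl⟩
  obtain ⟨i, hi⟩ : ∃ i, i = h.pos ⟨f, hfe⟩ := ⟨_, rfl⟩
  rw [← hg, ← hi] at hF hlf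
  rw [← hg]
  simp only [← hg, ← hi] at hinjf
  let nd' : D.E → ℕ → G.V := fun c j => if c = g then
    (if j ≤ i then (h.nd g j).1 else if j = i + 1 then x else (h.nd g (j - 1)).1) else (h.nd c j).1
  have n1 : ∀ c j, c ≠ g → nd' c j = (h.nd c j).1 := fun c j hc => by simp [nd', hc]
  have n2 : ∀ j, j ≤ i → nd' g j = (h.nd g j).1 := fun j hj => by simp [nd', hj]
  have n3 : nd' g (i + 1) = x := by simp [nd']
  have n4 : ∀ j, i + 1 ≤ j → nd' g (j + 1) = (h.nd g j).1 := fun j hj => by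
    simp only [nd', if_true]
    rw [if_neg (by omega), if_neg (by omega)]
    simp
  have hp : ∃ pe pf, ((pe = i ∧ pf = i + 1) ∨ (pe = i + 1 ∧ pf = i)) ∧
      G.Joins e (nd' g pe) (nd' g (pe + 1)) ∧ G.Joins f (nd' g pf) (nd' g (pf + 1)) := by
    rcases hF with ⟨h1, h2⟩ | ⟨h1, h2⟩
    · refine ⟨i, i + 1, Or.inl ⟨rfl, rfl⟩, ?_, ?_⟩
      · rw [n2 i le_rfl, n3, h1]; exact hje.symm
      · rw [n4 (i + 1) le_rfl, n3, h2]; exact hjf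
    · refine ⟨i + 1, i, Or.inr ⟨rfl, rfl⟩, ?_, ?_⟩
      · rw [n4 (i + 1) le_rfl, n3, h2]; exact hje
      · rw [n2 i le_rfl, n3, h1]; exact hjf.symm
  obtain ⟨pe, pf, hpp, hje', hjf'⟩ := hp
  let ε' : G.E → D.E := fun a => if ha : a = e then g else h.ε ⟨a, ha⟩
  let pos' : G.E → ℕ := fun a => if ha : a = e then pe else if a = f then pf else
    if h.ε ⟨a, ha⟩ = g ∧ i < h.pos ⟨a, ha⟩ then h.pos ⟨a, ha⟩ + 1 else h.pos ⟨a, ha⟩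
  have e1 : ε' e = g := by simp [ε']
  have e2 : ε' f = g := by simp [ε', hfe, hg]
  have e3 : ∀ a (ha : a ≠ e), ε' a = h.ε ⟨a, ha⟩ := fun a ha => by simp [ε', ha]
  have p1 : pos' e = pe := by simp [pos']
  have p2 : pos' f = pf := by simp [pos', hfe]
  have p3 : ∀ a (ha : a ≠ e), a ≠ f → pos' a = if h.ε ⟨a, ha⟩ = g ∧ i < h.pos ⟨a, ha⟩ then
      h.pos ⟨a, ha⟩ + 1 else h.pos ⟨a, ha⟩ := fun a ha haf => by simp [pos', ha, haf]
  have hends : ∀ a, G.Joins a (nd' (ε' a) (pos' a)) (nd' (ε' a) (pos' a + 1)) := by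
    intro a
    by_cases hae : a = e
    · subst hae; rw [e1, p1]; exact hje'
    by_cases haf : a = f
    · subst haf; rw [e2, p2]; exact hjf'
    rw [e3 a hae, p3 a hae haf]
    have hj := hA a hae haf
    by_cases hc : h.ε ⟨a, hae⟩ = g
    · have hne := hinjf a hae haf hc
      rw [hc] at hj ⊢
      by_cases hl : i < h.pos ⟨a, hae⟩
      · rw [if_pos ⟨rfl, hl⟩, n4 _ (by omega), n4 _ (by omega)]; exact hj
      · rw [if_neg (by tauto), n2 _ (by omega), n2 _ (by omega)]; exact hj
    · rw [if_neg (by tauto), n1 _ _ hc, n1 _ _ hc]; exact hj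
  refine ⟨⟨ε', pos', fun v => (h.q v).1, nd', ?_, ?_, ?_, ?_, ?_⟩⟩
  · intro a
    by_cases hae : a = e
    · subst hae; rw [e1, p1]; simp only [if_true]; omega
    by_cases haf : a = f
    · subst haf; rw [e2, p2]; simp only [if_true]; omega
    rw [e3 a hae, p3 a hae haf]
    have := hlt ⟨a, hae⟩
    split_ifs <;> first | omega | (exfalso; tauto)
  · have key : ∀ a (ha : a ≠ e), a ≠ f → h.ε ⟨a, ha⟩ = g → pos' a ≠ i ∧ pos' a ≠ i + 1 := by
      intro a ha haf hc
      have hne := hinjf a ha haf hc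
      rw [p3 a ha haf]
      split_ifs with h1
      · omega
      · constructor
        · exact hne
        · have : ¬ i < h.pos ⟨a, ha⟩ := fun h2 => h1 ⟨hc, h2⟩
          omega
    intro a b hab hpab
    by_cases hae : a = e <;> by_cases hbe : b = e
    · rw [hae, hbe]
    · exfalso
      subst hae
      rw [e1] at hab
      rw [p1] at hpab
      by_cases hbf : b = f
      · subst hbf; rw [p2] at hpab; omega
      · rw [e3 b hbe] at hab
        have := key b hbe hbf hab.symm
        omega
    · exfalso
      subst hbe
      rw [e1] at hab
      rw [p1] at hpab
      by_cases haf : a = f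
      · subst haf; rw [p2] at hpab; omega
      · rw [e3 a hae] at hab
        have := key a hae haf hab
        omega
    · by_cases haf : a = f <;> by_cases hbf : b = f
      · rw [haf, hbf]
      · exfalso
        subst haf
        rw [e2, e3 b hbe] at hab
        have := key b hbe hbf hab.symm
        rw [p2] at hpab
        omega
      · exfalso
        subst hbf
        rw [e2, e3 a hae] at hab
        have := key a hae haf hab
        rw [p2] at hpab
        omega
      · rw [e3 a hae, e3 b hbe] at hab
        rw [p3 a hae haf, p3 b hbe hbf, hab] at hpab
        have : h.pos ⟨a, hae⟩ = h.pos ⟨b, hbe⟩ := by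
          by_cases hc : h.ε ⟨b, hbe⟩ = g
          · simp only [hc, true_and] at hpab
            split_ifs at hpab <;> omega
          · simp only [hc, false_and, if_false] at hpab
            exact hpab
        exact congrArg Subtype.val (hinj _ _ hab this)
  · intro c
    by_cases hc : c = g
    · subst hc; rw [n2 0 (Nat.zero_le _), h.nd0]
    · rw [n1 _ _ hc, h.nd0]
  · intro c
    by_cases hc : c = g
    · subst hc; simp only [if_true]; rw [n4 _ (by omega), h.nd1]
    · simp only [if_neg hc]; rw [n1 _ _ hc, h.nd1]
  · intro a
    have := hends a
    unfold Joins at this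
    tauto

lemma exists_deg2 (G : Multigraph) {k : ℕ} (hc : G.Connected) (hb : ∀ e, ¬ G.Disconnects {e})
    (hG : Fintype.card G.E = Fintype.card G.V + k) (hk : 1 ≤ k) (hn : 2 * k < Fintype.card G.V) :
    ∃ (x y z : G.V) (e f : G.E), y ≠ x ∧ z ≠ x ∧ f ≠ e ∧ G.Joins e x y ∧ G.Joins f x z ∧
      (∀ a, a ≠ e → a ≠ f → G.src a ≠ x ∧ G.tgt a ≠ x) ∧ G.Disconnects {e, f} := by
  obtain ⟨x, hx⟩ : ∃ x, G.deg x ≤ 2 := by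
    by_contra hcon
    push Not at hcon
    have h1 : ∑ v : G.V, 3 ≤ ∑ v, G.deg v := sum_le_sum (fun v _ => hcon v)
    rw [sum_deg] at h1
    simp at h1
    omega
  have hcut : G.Disconnects (G.cutc {x}) := by
    rw [disc_iff]
    obtain ⟨y, hy⟩ := Fintype.exists_ne_of_one_lt_card (by omega) x
    refine ⟨{x}, ⟨x, rfl⟩, ⟨y, hy⟩, fun e he => ?_⟩
    rw [mem_cutc] at he
    tauto
  have hcard : (G.cutc {x}).card = 2 := by
    have h1 := (G.cutc_single_le x)
    have h2 : (G.cutc {x}).card ≠ 0 := by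
      intro h
      rw [card_eq_zero] at h
      rw [h] at hcut
      exact (connected_iff G).1 hc hcut
    have h3 : (G.cutc {x}).card ≠ 1 := by
      intro h
      obtain ⟨e, he⟩ := card_eq_one.1 h
      rw [he] at hcut
      exact hb e hcut
    omega
  let I : Finset G.E := (univ.filter fun e => G.src e = x) ∪ (univ.filter fun e => G.tgt e = x)
  have hI : I.card ≤ 2 := le_trans (card_union_le _ _) hx
  have hsub : G.cutc {x} ⊆ I := by
    intro a ha
    rw [mem_cutc] at ha
    simp only [Set.mem_singleton_iff] at ha
    simp only [I, mem_union, mem_filter, mem_univ, true_and]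
    tauto
  have hEq := eq_of_subset_of_card_le hsub (by omega)
  obtain ⟨e, f, hef, hs⟩ := card_eq_two.1 hcard
  have hJ : ∀ a ∈ G.cutc {x}, ∃ y, y ≠ x ∧ G.Joins a x y := by
    intro a ha
    rw [mem_cutc] at ha
    simp only [Set.mem_singleton_iff] at ha
    by_cases h1 : G.src a = x
    · exact ⟨G.tgt a, by tauto, Or.inl ⟨h1, rfl⟩⟩
    · exact ⟨G.src a, h1, Or.inr ⟨rfl, by tauto⟩⟩
  obtain ⟨y, hy, hje⟩ := hJ e (by rw [hs]; simp)
  obtain ⟨z, hz, hjf⟩ := hJ f (by rw [hs]; simp)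
  refine ⟨x, y, z, e, f, hy, hz, hef.symm, hje, hjf, ?_, hs ▸ hcut⟩
  intro a hae haf
  have : a ∉ I := by
    rw [← hEq, hs]
    simp [hae, haf]
  simp only [I, mem_union, mem_filter, mem_univ, true_and] at this
  tauto

lemma struct_lemma (k : ℕ) (hk : 1 ≤ k) (m : ℕ) : ∀ (G : Multigraph) (cl : G.E → Fin (3 * k)),
    Fintype.card G.E = m → G.Connected → (∀ e, ¬ G.Disconnects {e}) →
    Fintype.card G.E = Fintype.card G.V + k → Function.Surjective cl →
    (∀ e f, e ≠ f → (cl e = cl f ↔ G.Dp e f)) →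
    ∃ (D : Multigraph) (w : D.E → ℕ), D.TEC ∧ Fintype.card D.E = Fintype.card D.V + k ∧
      Fintype.card D.V = 2 * k ∧ (∀ f, 1 ≤ w f) ∧ ∑ f, w f = Fintype.card G.E ∧ Nonempty (GD G D w) := by
  induction m with
  | zero =>
    intro G cl hm _ _ _ hs _
    exfalso
    have := Fintype.card_le_of_surjective cl hs
    rw [Fintype.card_fin] at this
    omega
  | succ m ih =>
    intro G cl hm hc hb hG hs hcl
    have hle := Fintype.card_le_of_surjective cl hs
    rw [Fintype.card_fin] at hle
    by_cases heq : Fintype.card G.E = 3 * k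
    · have hbij : Function.Bijective cl := by
        rw [Fintype.bijective_iff_surjective_and_card]
        exact ⟨hs, by rw [heq, Fintype.card_fin]⟩
      have ht : G.TEC := G.tec_of_pairs (by
        intro e f hef hd
        exact hef (hbij.1 ((hcl e f hef).2 hd))) (by omega)
      refine ⟨G, fun _ => 1, ht, hG, by omega, fun _ => le_rfl, by simp, ⟨?_⟩⟩
      exact ⟨id, fun _ => 0, id, fun f j => if j = 0 then G.src f else G.tgt f, by simp,
        fun x y h _ => h, by simp, by simp, by simp⟩
    · obtain ⟨x, y, z, e, f, hyx, hzx, hfe, hje, hjf, hoth, hd⟩ := G.exists_deg2 hc hb hG hk (by omega)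
      have cE := G.ctr_cardE e x y hyx
      have cV := G.ctr_cardV e x y hyx
      have hcef : cl e = cl f := (hcl e f hfe.symm).2 hd
      obtain ⟨D, w, hT, h1, h2, h3, h4, ⟨h5⟩⟩ := ih (G.ctr e x y hyx) (fun a => cl a.1) (by omega)
        (G.ctr_conn e x y hyx hje hc)
        (by
          rintro ⟨a, ha⟩ h
          rw [G.ctr_single e x y hyx hje] at h
          exact hb a h)
        (by omega)
        (by
          intro c
          obtain ⟨a, ha⟩ := hs c
          by_cases hae : a = e
          · exact ⟨⟨f, hfe⟩, by rw [← ha, hae, hcef]⟩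
          · exact ⟨⟨a, hae⟩, ha⟩)
        (by
          rintro ⟨a, ha⟩ ⟨b, hb'⟩ hab
          rw [G.ctr_pair e x y hyx hje a b ha hb']
          exact hcl a b (fun h => hab (Subtype.ext h)))
      refine ⟨D, _, hT, h1, h2, ?_, ?_, gd_ext e f x y z hyx hzx hfe hje hjf hoth h5⟩
      · intro c
        have := h3 c
        split_ifs <;> omega
      · have : ∀ (g : D.E), ∑ c, (if c = g then w c + 1 else w c) = ∑ c, w c + 1 := by
          intro g
          have : ∀ c, (if c = g then w c + 1 else w c) = w c + if c = g then 1 else 0 := by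
            intro c; split_ifs <;> rfl
          simp only [this, sum_add_distrib]
          simp
        rw [this, h4]
        exact cE

end Multigraph


namespace Multigraph

lemma dk_card {D : Multigraph} {k : ℕ} (h : memDk k D) :
    Fintype.card D.V = 2 * k ∧ Fintype.card D.E = 3 * k ∧ D.TEC := by
  obtain ⟨h1, h2, h3, h4⟩ := h
  have hs := sum_deg D
  simp only [h2, sum_const, card_univ, smul_eq_mul] at hs
  unfold nE nV at h4
  exact ⟨by omega, by omega, h3⟩

lemma tec_dk {D : Multigraph} {k : ℕ} (hk : 1 ≤ k) (h : D.TEC)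
    (hc : Fintype.card D.E = Fintype.card D.V + k) (hV : Fintype.card D.V = 2 * k) : memDk k D :=
  ⟨h.connected, fun v => h.cubic hk hc hV v, h, hc⟩

lemma pos_of_memG {G : Multigraph} {n k : ℕ} (hk : 1 ≤ k) (h : memG G n (n + k)) : 1 ≤ n := by
  obtain ⟨h1, h2, _⟩ := h
  unfold nE at h2
  unfold nV at h1
  have : 0 < Fintype.card G.E := by omega
  obtain ⟨e⟩ := Fintype.card_pos_iff.1 this
  have : 0 < Fintype.card G.V := Fintype.card_pos_iff.2 ⟨G.src e⟩
  omega

lemma d2_lower {H : Multigraph} {n k : ℕ} (hk : 1 ≤ k) (h : memG H n (n + k)) (q : ℕ) :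
    2 * (q : ℤ) * ((n + k : ℕ) : ℤ) - ((3 * k : ℕ) : ℤ) * (q * (q + 1)) ≤ 2 * ((H.d 2 : ℕ) : ℤ) := by
  have hn := pos_of_memG hk h
  obtain ⟨h1, h2, h3⟩ := h
  unfold nE at h2
  unfold nV at h1
  obtain ⟨cl, hcl⟩ := exists_coloring k hk (n + k) H h2 h3 (by omega) (by omega)
  have h4 := sum_choose_ge (cls cl) q
  rw [sum_cls, h2, Fintype.card_fin] at h4
  have h5 : ((∑ c, (cls cl c).choose 2 : ℕ) : ℤ) ≤ (H.d 2 : ℕ) := by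
    exact_mod_cast d2_ge H cl hcl
  linarith

lemma balanced_min {G D : Multigraph} {n k : ℕ} (hk : 1 ≤ k) (hG : memG G n (n + k))
    (w : D.E → ℕ) (hD : memDk k D) (hs : IsWeakSubdivision G D w) (hb : BalancedWeights w)
    (H : Multigraph) (hH : memG H n (n + k)) : G.d 2 ≤ H.d 2 := by
  obtain ⟨c1, c2, hT⟩ := dk_card hD
  obtain ⟨φ⟩ := hs.2
  have hV : Nonempty D.V := Fintype.card_pos_iff.1 (by omega)
  have hE : Nonempty D.E := Fintype.card_pos_iff.1 (by omega)
  have hd : G.d 2 = ∑ f, (w f).choose 2 := by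
    rw [iso_d φ, subd_eq, subd_d2 D w hT hV]
  have hc : ∑ f, w f = n + k := by
    rw [← subd_cardE, ← hG.2.1]
    exact (Fintype.card_congr φ.eMap).symm
  obtain ⟨f0, hf0⟩ := Finite.exists_min w
  have h1 := (sum_choose_eq w (w f0)).2 (fun c => by
    have := hf0 c
    have := hb c f0
    omega)
  rw [hc, c2, ← hd] at h1
  have h2 := d2_lower hk hH (w f0)
  rw [h1] at h2
  omega

lemma tec_d2 {G : Multigraph} (h : G.TEC) : G.d 2 = 0 := by
  unfold d
  rw [card_eq_zero, filter_eq_empty_iff]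
  rintro F _ ⟨h1, h2⟩
  have := h F h2
  omega

lemma d2_zero_tec {G : Multigraph} (h : G.d 2 = 0) (h2 : 2 ≤ Fintype.card G.E) : G.TEC := by
  apply tec_of_pairs G _ h2
  intro e f hef hd
  unfold d at h
  rw [card_eq_zero, filter_eq_empty_iff] at h
  exact h (mem_univ {e, f}) ⟨card_pair hef, hd⟩

lemma min_small {G : Multigraph} {n k : ℕ} (hk : 1 ≤ k) (hG : memG G n (n + k)) (hn : n ≤ 2 * k)
    (hmin : ∀ H : Multigraph, memG H n (n + k) → G.d 2 ≤ H.d 2) :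
    ∃ (D : Multigraph) (w : D.E → ℕ),
      memDk k D ∧ IsWeakSubdivision G D w ∧ BalancedWeights w := by
  have hn1 := pos_of_memG hk hG
  obtain ⟨H, h1, h2, h3⟩ := exists_tec k n hn1 hn
  have h4 := hmin H ⟨h3, by unfold nE; omega, h1.connected⟩
  rw [tec_d2 h1] at h4
  obtain ⟨g1, g2, g3⟩ := hG
  unfold nE at g2
  unfold nV at g1
  have hT : G.TEC := d2_zero_tec (by omega) (by omega)
  obtain ⟨D, d1, d2, d3, d4⟩ := exists_expand_to G hT (k := k) (by omega) (by omega) (2 * k) (by omega) le_rfl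
  obtain ⟨w, hw⟩ := exp_case d4 d2 (by omega) g3 (Fintype.card_pos_iff.1 (by omega))
  exact ⟨D, w, tec_dk hk d1 d2 d3, hw⟩

lemma exists_weights {E : Type} [Fintype E] (q r : ℕ) (hr : r ≤ Fintype.card E) :
    ∃ w : E → ℕ, (∀ f, w f = q ∨ w f = q + 1) ∧ ∑ f, w f = Fintype.card E * q + r := by
  obtain ⟨S, _, hS⟩ := exists_subset_card_eq (s := (univ : Finset E)) (n := r) (by simpa using hr)
  refine ⟨fun f => q + if f ∈ S then 1 else 0, ?_, ?_⟩
  · intro f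
    dsimp only
    split_ifs <;> omega
  · rw [sum_add_distrib]
    simp [hS]

lemma min_large {G : Multigraph} {n k : ℕ} (hk : 1 ≤ k) (hG : memG G n (n + k)) (hn : 2 * k < n)
    (hmin : ∀ H : Multigraph, memG H n (n + k) → G.d 2 ≤ H.d 2) :
    ∃ (D : Multigraph) (w : D.E → ℕ),
      memDk k D ∧ IsWeakSubdivision G D w ∧ BalancedWeights w := by
  obtain ⟨q, r, hq, hr, hqr⟩ : ∃ q r, 1 ≤ q ∧ r ≤ 3 * k ∧ 3 * k * q + r = n + k :=
    ⟨(n + k) / (3 * k), (n + k) % (3 * k), (Nat.one_le_div_iff (by omega)).2 (by omega),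
      (Nat.mod_lt _ (by omega)).le, Nat.div_add_mod _ _⟩
  obtain ⟨D0, t1, t2, t3⟩ := exists_tec k (2 * k) (by omega) le_rfl
  have t4 : Fintype.card D0.E = 3 * k := by omega
  obtain ⟨w0, hw0, hs0⟩ := exists_weights (E := D0.E) q r (by omega)
  rw [t4, hqr] at hs0
  have hz0 : ZeroAcyclic D0 w0 := zero_pos (fun f => by have := hw0 f; omega)
  have hV0 : Nonempty D0.V := Fintype.card_pos_iff.1 (by omega)
  have hle := hmin (subd D0 w0) (by
    have h1 := subd_cardE D0 w0
    have h2 := subd_cardV' D0 w0 hz0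
    exact ⟨by unfold nV; omega, by unfold nE; omega, subd_conn D0 w0 t1⟩)
  rw [subd_d2 D0 w0 t1 hV0] at hle
  have heq0 := (sum_choose_eq w0 q).2 hw0
  rw [hs0, t4] at heq0
  obtain ⟨g1, g2, g3⟩ := hG
  unfold nE at g2
  unfold nV at g1
  obtain ⟨cl, hcl⟩ := exists_coloring k hk (n + k) G g2 g3 (by omega) (by omega)
  have hge := d2_ge G cl hcl
  have h4 := sum_choose_ge (cls cl) q
  rw [sum_cls, g2, Fintype.card_fin] at h4
  have h5 : ∀ c, cls cl c = q ∨ cls cl c = q + 1 := by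
    rw [← sum_choose_eq, sum_cls, g2, Fintype.card_fin]
    omega
  have h6 : G.d 2 ≤ ∑ c, (cls cl c).choose 2 := by omega
  have hsurj : Function.Surjective cl := by
    intro c
    have : 0 < cls cl c := by have := h5 c; omega
    unfold cls at this
    obtain ⟨e, he⟩ := card_pos.1 this
    simp only [mem_filter] at he
    exact ⟨e, he.2⟩
  have hbr : ∀ e, ¬ G.Disconnects {e} := by
    intro b hb
    have hall : ∀ a, cl a = cl b := by
      intro a
      by_cases hab : a = b
      · rw [hab]
      · exact d2_eq_conv G cl hcl h6 a b hab (G.disc_mono (by simp) hb)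
    have := Fintype.card_le_one_iff_subsingleton.2 (⟨fun c c' => by
      obtain ⟨a, rfl⟩ := hsurj c
      obtain ⟨a', rfl⟩ := hsurj c'
      rw [hall a, hall a']⟩ : Subsingleton (Fin (3 * k)))
    rw [Fintype.card_fin] at this
    omega
  obtain ⟨D, w, d1, d2, d3, d4, d5, ⟨d6⟩⟩ := struct_lemma k hk (n + k) G cl g2 g3 hbr (by omega) hsurj
    (fun e f hef => ⟨hcl e f hef, d2_eq_conv G cl hcl h6 e f hef⟩)
  have hz := zero_pos d4
  have hiso := crit d6 hz d2 (by omega) d5 (conn_inc g3 (Fintype.card_pos_iff.1 (by omega)))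
  refine ⟨D, w, tec_dk hk d1 d2 d3, ⟨hz, hiso⟩, ?_⟩
  obtain ⟨φ⟩ := hiso
  have hd : G.d 2 = ∑ f, (w f).choose 2 := by
    rw [iso_d φ, subd_eq, subd_d2 D w d1 (Fintype.card_pos_iff.1 (by omega))]
  have hcw : Fintype.card D.E = 3 * k := by omega
  have h7 := sum_choose_ge w q
  rw [d5, g2, hcw] at h7
  have h8 : ∀ c, w c = q ∨ w c = q + 1 := by
    rw [← sum_choose_eq, d5, g2, hcw]
    omega
  intro e f
  have := h8 e
  have := h8 f
  omega

lemma choose_two_succ (a : ℕ) : (a + 1).choose 2 = a.choose 2 + a := by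
  rw [Nat.choose_succ_succ' a 1]; simp [add_comm]

lemma move_sum {E : Type} [Fintype E] (w : E → ℕ) (e f : E) (h : w f + 2 ≤ w e) :
    ∑ g, (moveWeight w e f g).choose 2 < ∑ g, (w g).choose 2 := by
  have hef : e ≠ f := by rintro rfl; omega
  have hfm : f ∈ univ.erase e := by simp [hef.symm]
  rw [← add_sum_erase univ _ (mem_univ e), ← add_sum_erase (univ.erase e) _ hfm,
    ← add_sum_erase univ (fun g => (w g).choose 2) (mem_univ e),
    ← add_sum_erase (univ.erase e) (fun g => (w g).choose 2) hfm]
  have h1 : ∑ g ∈ (univ.erase e).erase f, (moveWeight w e f g).choose 2 =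
      ∑ g ∈ (univ.erase e).erase f, (w g).choose 2 := by
    apply sum_congr rfl
    intro g hg
    simp only [mem_erase, mem_univ, and_true] at hg
    simp [moveWeight, hg.1, hg.2]
  rw [h1]
  have h2 : moveWeight w e f e = w e - 1 := by simp [moveWeight, hef]
  have h3 : moveWeight w e f f = w f + 1 := by simp [moveWeight]
  rw [h2, h3, choose_two_succ]
  obtain ⟨a, ha⟩ : ∃ a, w e = a + 1 := ⟨w e - 1, by omega⟩
  rw [ha, choose_two_succ, Nat.add_sub_cancel]
  omega

end Multigraph


/-- (a) G ∈ 𝒢_{n,n+k} minimizes d₂ iff G is a balanced weak subdivision of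
some D ∈ 𝒟_k; (b) moving one edge from a chain to another chain shorter by at least 2
strictly decreases d₂. -/
theorem d2_minimizers (n k : ℕ) (hk : 1 ≤ k) :
    (∀ G : Multigraph, memG G n (n + k) →
      ((∀ H : Multigraph, memG H n (n + k) → G.d 2 ≤ H.d 2) ↔
        ∃ (D : Multigraph) (w : D.E → ℕ),
          memDk k D ∧ IsWeakSubdivision G D w ∧ BalancedWeights w)) ∧
    (∀ (D : Multigraph) (w : D.E → ℕ), memDk k D → ZeroAcyclic D w →
      ¬ BalancedWeights w →
      ∀ e f : D.E, w f + 2 ≤ w e →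
        (subdivide D (moveWeight w e f)).d 2 < (subdivide D w).d 2) := by
  refine ⟨fun G hG => ⟨fun hmin => ?_, ?_⟩, ?_⟩
  · rcases Nat.lt_or_ge (2 * k) n with h | h
    · exact Multigraph.min_large hk hG h hmin
    · exact Multigraph.min_small hk hG h hmin
  · rintro ⟨D, w, hD, hs, hb⟩ H hH
    exact Multigraph.balanced_min hk hG w hD hs hb H hH
  · intro D w hD _ _ e f hef
    have hT := (Multigraph.dk_card hD).2.2
    rw [Multigraph.subd_eq, Multigraph.subd_eq, Multigraph.subd_d2 D _ hT ⟨D.src e⟩,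
      Multigraph.subd_d2 D _ hT ⟨D.src e⟩]
    exact Multigraph.move_sum w e f hef
end
end

section
/- Let m > k ≥ 2, let D ∈ D_k have only trivial 3-bonds, and consider a balanced weighting of D together with the implied graph G ∈ B_m(D). (a) If D has balanced π^v-values, then G minimizes d_3 within B_m(D). (b) If moreover m ≥ 2k, then G minimizes d_3 within B_m(D) if and only if D has balanced π^v-values. -/
open Classical Finset

noncomputable section

def incE (D : Multigraph) (u : D.V) : Finset D.E :=
  Finset.univ.filter fun e => D.src e = u ∨ D.tgt e = u

lemma disc_iff (G : Multigraph) (F : Finset G.E) :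
    G.Disconnects F ↔ ∃ c : G.V → Prop, (∃ u, c u) ∧ (∃ v, ¬ c v) ∧
      ∀ e, e ∉ F → (c (G.src e) ↔ c (G.tgt e)) := by
  unfold Multigraph.Disconnects Multigraph.ConnOn
  constructor
  · intro h
    push Not at h
    obtain ⟨u, v, huv⟩ := h
    refine ⟨fun x => Relation.ReflTransGen (G.stepOn (univ \ F)) u x, ⟨u, .refl⟩, ⟨v, huv⟩, ?_⟩
    intro e he
    constructor
    · intro h
      exact h.tail ⟨e, by simp [he], Or.inl ⟨rfl, rfl⟩⟩
    · intro h
      exact h.tail ⟨e, by simp [he], Or.inr ⟨rfl, rfl⟩⟩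
  · rintro ⟨c, ⟨u, hu⟩, ⟨v, hv⟩, h⟩ hc
    have key : ∀ x, Relation.ReflTransGen (G.stepOn (univ \ F)) u x → c x := by
      intro x hx
      induction hx with
      | refl => exact hu
      | tail _ hs ih =>
        obtain ⟨e, he, h1 | h1⟩ := hs
        · have := h e (by simpa using he)
          rw [h1.1, h1.2] at this
          exact this.1 ih
        · have := h e (by simpa using he)
          rw [h1.1, h1.2] at this
          exact this.2 ih
    exact hv (key v (hc u v))

lemma cut_disc (G : Multigraph) (A : Finset G.V) (h1 : A.Nonempty) (h2 : A ≠ univ) :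
    G.Disconnects (G.cutEdges A) := by
  rw [disc_iff]
  obtain ⟨u, hu⟩ := h1
  have : ∃ v, v ∉ A := by
    by_contra h
    push Not at h
    exact h2 (by ext; simp [h])
  obtain ⟨v, hv⟩ := this
  refine ⟨fun x => x ∈ A, ⟨u, hu⟩, ⟨v, hv⟩, ?_⟩
  intro e he
  simp only [Multigraph.cutEdges, mem_filter, mem_univ, true_and] at he
  tauto

lemma disc_cut (G : Multigraph) (F : Finset G.E) (h : G.Disconnects F) :
    ∃ A : Finset G.V, A.Nonempty ∧ A ≠ univ ∧ G.cutEdges A ⊆ F := by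
  rw [disc_iff] at h
  obtain ⟨c, ⟨u, hu⟩, ⟨v, hv⟩, h⟩ := h
  refine ⟨univ.filter c, ⟨u, by simp [hu]⟩, ?_, ?_⟩
  · intro h'
    have : v ∈ univ.filter c := by rw [h']; simp
    simp at this
    exact hv this
  · intro e he
    by_contra hne
    have := h e hne
    simp [Multigraph.cutEdges] at he
    tauto

structure GoodG (k : ℕ) (D : Multigraph) : Prop where
  hk : 2 ≤ k
  nV : Fintype.card D.V = 2 * k
  nE : Fintype.card D.E = 3 * k
  noloop : ∀ e, D.src e ≠ D.tgt e
  inc3 : ∀ u, (incE D u).card = 3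
  cut3 : ∀ A : Finset D.V, A.Nonempty → A ≠ univ → 3 ≤ (D.cutEdges A).card
  disc : ∀ F : Finset D.E, F.card = 3 → (D.Disconnects F ↔ ∃ u, F = incE D u)
  incInj : Function.Injective (incE D)

lemma sum_deg (D : Multigraph) : ∑ v, D.deg v = 2 * Fintype.card D.E := by
  unfold Multigraph.deg
  rw [sum_add_distrib]
  have h1 := Finset.card_eq_sum_card_fiberwise (f := D.src) (s := univ) (t := univ) (by simp)
  have h2 := Finset.card_eq_sum_card_fiberwise (f := D.tgt) (s := univ) (t := univ) (by simp)
  rw [← h1, ← h2, card_univ]; ring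

lemma goodG_of (k : ℕ) (hk : 2 ≤ k) (D : Multigraph) (hD : memDk k D)
    (htriv : OnlyTrivialThreeBonds D) : GoodG k D := by
  obtain ⟨hconn, hdeg, h3, hex⟩ := hD
  have hs := sum_deg D
  simp only [hdeg] at hs
  rw [sum_const, card_univ] at hs
  simp only [Multigraph.nE, Multigraph.nV, smul_eq_mul] at hex hs
  have nV : Fintype.card D.V = 2 * k := by omega
  have nE : Fintype.card D.E = 3 * k := by omega
  have cut3 : ∀ A : Finset D.V, A.Nonempty → A ≠ univ → 3 ≤ (D.cutEdges A).card :=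
    fun A h1 h2 => h3 _ (cut_disc D A h1 h2)
  have single : ∀ u : D.V, ({u} : Finset D.V) ≠ univ := by
    intro u h
    have := congrArg Finset.card h
    rw [card_singleton, card_univ] at this
    omega
  have cutdeg : ∀ u, (D.cutEdges {u}).card + 2 * (univ.filter fun e => D.src e = u ∧ D.tgt e = u).card
      = D.deg u := by
    intro u
    unfold Multigraph.deg Multigraph.cutEdges
    have e1 : (univ.filter fun e => D.src e = u) = (univ.filter fun e => D.src e = u ∧ D.tgt e ≠ u) ∪
      (univ.filter fun e => D.src e = u ∧ D.tgt e = u) := by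
      ext e; simp; tauto
    have e2 : (univ.filter fun e => D.tgt e = u) = (univ.filter fun e => D.src e ≠ u ∧ D.tgt e = u) ∪
      (univ.filter fun e => D.src e = u ∧ D.tgt e = u) := by
      ext e; simp; tauto
    have e3 : (univ.filter fun e => D.src e ∈ ({u} : Finset D.V) ∧ D.tgt e ∉ ({u} : Finset D.V) ∨
        D.src e ∉ ({u} : Finset D.V) ∧ D.tgt e ∈ ({u} : Finset D.V)) =
        (univ.filter fun e => D.src e = u ∧ D.tgt e ≠ u) ∪
        (univ.filter fun e => D.src e ≠ u ∧ D.tgt e = u) := by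
      ext e; simp
    rw [e1, e2, e3, card_union_of_disjoint, card_union_of_disjoint, card_union_of_disjoint]
    · ring
    all_goals
      rw [Finset.disjoint_left]
      intro e
      simp
      try tauto
  have noloop : ∀ e, D.src e ≠ D.tgt e := by
    intro e he
    have h1 := cutdeg (D.src e)
    have h2 := cut3 {D.src e} (singleton_nonempty _) (single _)
    rw [hdeg] at h1
    have h4 : 0 < (univ.filter fun e' => D.src e' = D.src e ∧ D.tgt e' = D.src e).card := by
      rw [card_pos]
      exact ⟨e, by simp [he]⟩
    omega
  have cutinc : ∀ u, D.cutEdges {u} = incE D u := by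
    intro u
    ext e
    have := noloop e
    simp only [Multigraph.cutEdges, incE, mem_filter, mem_univ, true_and, mem_singleton]
    constructor
    · tauto
    · rintro (rfl | rfl)
      · exact Or.inl ⟨rfl, this.symm⟩
      · exact Or.inr ⟨this, rfl⟩
  have inc3 : ∀ u, (incE D u).card = 3 := by
    intro u
    have h1 := cutdeg u
    have h2 := cut3 {u} (singleton_nonempty _) (single _)
    rw [hdeg] at h1
    rw [← cutinc]
    omega
  refine ⟨hk, nV, nE, noloop, inc3, cut3, ?_, ?_⟩
  · intro F hF
    constructor
    · intro hd
      obtain ⟨A, hA1, hA2, hA3⟩ := disc_cut D F hd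
      have hc := cut3 A hA1 hA2
      have hFA : D.cutEdges A = F := Finset.eq_of_subset_of_card_le hA3 (by omega)
      apply htriv F _ hF
      refine ⟨⟨A, hA1, hA2, hFA.symm⟩, ?_⟩
      rintro F' hF' ⟨B, hB1, hB2, rfl⟩
      have := cut3 B hB1 hB2
      exact Finset.eq_of_subset_of_card_le hF' (by omega)
    · rintro ⟨u, rfl⟩
      rw [← cutinc]
      exact cut_disc D {u} (singleton_nonempty _) (single u)
  · intro u v huv
    by_contra hne
    have h1 := cut3 {u, v} ⟨u, by simp⟩ (by
      intro h
      have := congrArg Finset.card h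
      rw [card_univ] at this
      have h2 : ({u, v} : Finset D.V).card ≤ 2 := card_le_two
      omega)
    have : D.cutEdges {u, v} = ∅ := by
      ext e
      have h : e ∈ incE D u ↔ e ∈ incE D v := by rw [huv]
      simp only [incE, mem_filter, mem_univ, true_and] at h
      simp only [Multigraph.cutEdges, mem_filter, mem_univ, true_and, mem_insert, mem_singleton,
        notMem_empty, iff_false]
      intro h'
      rcases h' with ⟨h1 | h1, h2⟩ | ⟨h2, h1 | h1⟩ <;> simp_all
    rw [this] at h1
    simp at h1

lemma cn_zero (D : Multigraph) (w : D.E → ℕ) (e : D.E) :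
    chainNode D w e 0 = Sum.inl (Quot.mk _ (D.src e)) := by
  simp [chainNode]

lemma cn_last (D : Multigraph) (w : D.E → ℕ) (e : D.E) :
    chainNode D w e (w e) = Sum.inl (Quot.mk _ (D.tgt e)) := by
  unfold chainNode
  rw [dif_neg (by omega)]
  split_ifs with h
  · congr 1
    exact Quot.sound ⟨e, h, rfl, rfl⟩
  · rfl

lemma cn_mid (D : Multigraph) (w : D.E → ℕ) (e : D.E) (x : Fin (w e - 1)) :
    chainNode D w e (x.val + 1) = Sum.inr ⟨e, x⟩ := by
  unfold chainNode
  rw [dif_pos (by omega)]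
  simp

/-- two edges in one chain disconnect -/
lemma sub_disc_two (D : Multigraph) [Nonempty D.V] (w : D.E → ℕ) (F : Finset (subdivide D w).E)
    (e : D.E) (i j : Fin (w e)) (hij : i < j)
    (hi : (⟨e, i⟩ : Σ f : D.E, Fin (w f)) ∈ F) (hj : (⟨e, j⟩ : Σ f : D.E, Fin (w f)) ∈ F) :
    (subdivide D w).Disconnects F := by
  rw [disc_iff]
  let c : (subdivide D w).V → Prop := fun x => ∃ p : ℕ, i.val < p ∧ p ≤ j.val ∧ x = chainNode D w e p
  have hc : ∀ f p, p ≤ w f → (c (chainNode D w f p) ↔ f = e ∧ i.val < p ∧ p ≤ j.val) := by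
    intro f p hp
    constructor
    · rintro ⟨p', h1, h2, h3⟩
      have hj := j.2
      unfold chainNode at h3
      rw [dif_pos (show 0 < p' ∧ p' < w e by omega)] at h3
      split_ifs at h3 with h4 h5
      obtain ⟨rfl, h3⟩ := Sigma.mk.inj (Sum.inr.inj h3)
      simp at h3
      refine ⟨rfl, ?_, ?_⟩ <;> omega
    · rintro ⟨rfl, h1, h2⟩
      exact ⟨p, h1, h2, rfl⟩
  refine ⟨c, ⟨chainNode D w e j, j, hij, le_rfl, rfl⟩, ⟨chainNode D w e 0, ?_⟩, ?_⟩
  · rw [hc _ _ (by omega)]; simp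
  · rintro ⟨f, l⟩ hl
    change c (chainNode D w f l.val) ↔ c (chainNode D w f (l.val + 1))
    have hl2 := l.2
    rw [hc _ _ (by omega), hc _ _ (by omega)]
    by_cases hf : f = e
    · subst hf
      have h1 : l.val ≠ i.val := by
        intro h; apply hl; rw [Fin.ext h]; exact hi
      have h2 : l.val ≠ j.val := by
        intro h; apply hl; rw [Fin.ext h]; exact hj
      simp only [true_and]
      omega
    · simp [hf]

/-- Lifting a disconnection. -/
lemma sub_disc_lift (D : Multigraph) (w : D.E → ℕ) (F : Finset (subdivide D w).E)
    (h : D.Disconnects (F.image Sigma.fst)) : (subdivide D w).Disconnects F := by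
  rw [disc_iff] at h ⊢
  obtain ⟨c, ⟨u, hu⟩, ⟨v, hv⟩, h⟩ := h
  have hT : ∀ e, e ∉ F.image Sigma.fst ↔ ∀ i : Fin (w e), (⟨e, i⟩ : Σ f : D.E, Fin (w f)) ∉ F := by
    intro e
    constructor
    · intro h i hi
      exact h (mem_image.2 ⟨_, hi, rfl⟩)
    · intro h hi
      obtain ⟨⟨e', i⟩, h1, h2⟩ := mem_image.1 hi
      simp only at h2
      subst h2
      exact h i h1
  have hz : ∀ a b, zeroRel D w a b → c a = c b := by
    rintro a b ⟨e, he, rfl, rfl⟩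
    apply propext
    apply h
    rw [hT]
    intro i
    have := i.2
    omega
  let c' : (subdivide D w).V → Prop := fun x => match x with
    | Sum.inl x => Quot.lift c hz x
    | Sum.inr ⟨e, x⟩ => if ∃ i : Fin (w e), (⟨e, i⟩ : Σ f : D.E, Fin (w f)) ∈ F ∧ i.val < x.val + 1
        then c (D.tgt e) else c (D.src e)
  have key : ∀ e p, p ≤ w e → (c' (chainNode D w e p) ↔
      if ∃ i : Fin (w e), (⟨e, i⟩ : Σ f : D.E, Fin (w f)) ∈ F ∧ i.val < p
        then c (D.tgt e) else c (D.src e)) := by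
    intro e p hp
    rcases Nat.eq_zero_or_pos p with rfl | h0
    · rw [cn_zero]
      simp [c']
    rcases hp.eq_or_lt with rfl | h1
    · rw [cn_last]
      split_ifs with h2
      · exact Iff.rfl
      · change c _ ↔ _
        rw [h]
        rw [hT]
        intro i hi
        exact h2 ⟨i, hi, i.2⟩
    · obtain ⟨x, rfl⟩ : ∃ x : Fin (w e - 1), p = x.val + 1 := ⟨⟨p - 1, by omega⟩, by simp; omega⟩
      rw [cn_mid]
  refine ⟨c', ⟨Sum.inl (Quot.mk _ u), hu⟩, ⟨Sum.inl (Quot.mk _ v), hv⟩, ?_⟩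
  rintro ⟨e, j⟩ hj
  change c' (chainNode D w e j.val) ↔ c' (chainNode D w e (j.val + 1))
  have hj2 := j.2
  rw [key _ _ (by omega), key _ _ (by omega)]
  have : (∃ i : Fin (w e), (⟨e, i⟩ : Σ f : D.E, Fin (w f)) ∈ F ∧ i.val < j.val) ↔
      (∃ i : Fin (w e), (⟨e, i⟩ : Σ f : D.E, Fin (w f)) ∈ F ∧ i.val < j.val + 1) := by
    constructor
    · rintro ⟨i, h1, h2⟩
      exact ⟨i, h1, by omega⟩
    · rintro ⟨i, h1, h2⟩
      refine ⟨i, h1, ?_⟩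
      have : i.val ≠ j.val := by
        intro h; apply hj; rw [← Fin.ext h]; exact h1
      omega
  simp only [this]

lemma sub_disc_drop (D : Multigraph) (w : D.E → ℕ) (F : Finset (Σ f : D.E, Fin (w f)))
    (hinj : Set.InjOn Sigma.fst (F : Set (Σ f : D.E, Fin (w f))))
    (h : Multigraph.Disconnects (subdivide D w) F) : D.Disconnects (F.image Sigma.fst) := by
  replace h := (disc_iff _ _).1 h
  rw [disc_iff]
  obtain ⟨c, ⟨u, hu⟩, ⟨v, hv⟩, h⟩ := h
  have hstep : ∀ e p, p < w e → (∀ i : Fin (w e), i.val = p → (⟨e, i⟩ : Σ f : D.E, Fin (w f)) ∉ F) →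
      (c (chainNode D w e p) ↔ c (chainNode D w e (p+1))) := by
    intro e p hp hF
    exact h ⟨e, ⟨p, hp⟩⟩ (hF _ rfl)
  have hrun : ∀ e p q, p ≤ q → q ≤ w e →
      (∀ i : Fin (w e), p ≤ i.val → i.val < q → (⟨e, i⟩ : Σ f : D.E, Fin (w f)) ∉ F) →
      (c (chainNode D w e p) ↔ c (chainNode D w e q)) := by
    intro e p q hpq
    induction q, hpq using Nat.le_induction with
    | base => intros; rfl
    | succ q hq ih =>
      intro h1 h2
      rw [ih (by omega) (fun i h3 h4 => h2 i h3 (by omega))]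
      exact hstep e q (by omega) (fun i hi => h2 i (by omega) (by omega))
  let c' : D.V → Prop := fun x => c (Sum.inl (Quot.mk _ x))
  have hall : ∀ e p, p ≤ w e → (c (chainNode D w e p) ↔ c' (D.src e)) ∨
      (c (chainNode D w e p) ↔ c' (D.tgt e)) := by
    intro e p hp
    by_cases hx : ∃ i : Fin (w e), (⟨e, i⟩ : Σ f : D.E, Fin (w f)) ∈ F ∧ i.val < p
    · obtain ⟨i, hi, hip⟩ := hx
      right
      rw [hrun e p (w e) hp le_rfl, cn_last]
      intro j h1 h2 hj
      have := hinj hi hj rfl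
      simp at this
      subst this
      omega
    · push Not at hx
      left
      rw [← hrun e 0 p (by omega) hp, cn_zero]
      intro j h1 h2 hj
      have := hx j hj
      omega
  refine ⟨c', ?_, ?_, ?_⟩
  · by_contra hno
    push Not at hno
    rcases u with u | ⟨e, x⟩
    · induction u using Quot.ind with
      | mk u => exact hno u hu
    · rw [← cn_mid] at hu
      have := hall e (x.val + 1) (by omega)
      have h1 := hno (D.src e)
      have h2 := hno (D.tgt e)
      tauto
  · by_contra hno
    push Not at hno
    rcases v with u | ⟨e, x⟩
    · induction u using Quot.ind with
      | mk u => exact hv (hno u)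
    · rw [← cn_mid] at hv
      have := hall e (x.val + 1) (by omega)
      have h1 := hno (D.src e)
      have h2 := hno (D.tgt e)
      tauto
  · intro e he
    have := hrun e 0 (w e) (by omega) le_rfl (by
      intro i _ _ hi
      exact he (mem_image.2 ⟨_, hi, rfl⟩))
    rw [cn_zero, cn_last] at this
    exact this

lemma card_transversal {E : Type} (w : E → ℕ) [Fintype E] (T : Finset E) :
    (univ.filter fun F : Finset (Σ f : E, Fin (w f)) =>
      Set.InjOn Sigma.fst (F : Set (Σ f : E, Fin (w f))) ∧ F.image Sigma.fst = T).card =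
      ∏ e ∈ T, w e := by
  have h1 : (T.pi (fun e => (univ : Finset (Fin (w e))))).card = ∏ e ∈ T, w e := by
    rw [Finset.card_pi]; simp
  rw [← h1]
  symm
  apply Finset.card_bij (fun f _ => T.attach.image (fun e => (⟨e.1, f e.1 e.2⟩ : Σ f : E, Fin (w f))))
  · intro f _
    simp only [mem_filter, mem_univ, true_and]
    constructor
    · intro a ha b hb hab
      simp only [coe_image, Set.mem_image] at ha hb
      obtain ⟨x, _, rfl⟩ := ha
      obtain ⟨y, _, rfl⟩ := hb
      have : x = y := Subtype.ext hab
      rw [this]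
    · ext e
      simp
  · intro f _ g _ hfg
    funext e he
    have : (⟨e, f e he⟩ : Σ f : E, Fin (w f)) ∈ T.attach.image (fun e => (⟨e.1, f e.1 e.2⟩ : Σ f : E, Fin (w f))) :=
      mem_image.2 ⟨⟨e, he⟩, by simp, rfl⟩
    rw [hfg] at this
    obtain ⟨⟨e', he'⟩, _, h2⟩ := mem_image.1 this
    simp only [Sigma.mk.injEq] at h2
    obtain ⟨rfl, h2⟩ := h2
    exact (eq_of_heq h2).symm
  · intro F hF
    simp only [mem_filter, mem_univ, true_and] at hF
    obtain ⟨hinj, rfl⟩ := hF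
    have hex : ∀ e, ∀ he : e ∈ F.image Sigma.fst, ∃ i : Fin (w e), (⟨e, i⟩ : Σ f : E, Fin (w f)) ∈ F := by
      intro e he
      obtain ⟨⟨e', i⟩, h1, h2⟩ := mem_image.1 he
      simp only at h2
      subst h2
      exact ⟨i, h1⟩
    choose g hg using hex
    refine ⟨g, by simp, ?_⟩
    ext ⟨e, i⟩
    simp only [mem_image, mem_attach, true_and]
    constructor
    · rintro ⟨a, h2⟩
      rw [← h2]
      exact hg _ _
    · intro h
      have he : e ∈ F.image Sigma.fst := mem_image.2 ⟨_, h, rfl⟩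
      refine ⟨⟨e, he⟩, ?_⟩
      exact hinj (hg e he) h rfl

lemma d3_formula (k : ℕ) (D : Multigraph) (hD : GoodG k D) (w : D.E → ℕ) :
    (subdivide D w).d 3 + ∑ T ∈ powersetCard 3 (univ : Finset D.E), ∏ e ∈ T, w e =
      (∑ e, w e).choose 3 + ∑ u, ∏ e ∈ incE D u, w e := by
  have hne : Nonempty D.V := by
    rw [← Fintype.card_pos_iff, hD.nV]
    have := hD.hk
    omega
  have hconn : ((univ : Finset (Finset (subdivide D w).E)).filter fun F => F.card = 3 ∧
      ¬ (subdivide D w).Disconnects F).card =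
      ∑ T ∈ (powersetCard 3 (univ : Finset D.E)).filter (fun T => ¬ D.Disconnects T), ∏ e ∈ T, w e := by
    have hchar : ∀ F : Finset (Σ f : D.E, Fin (w f)), (F.card = 3 ∧ ¬ Multigraph.Disconnects (subdivide D w) F) ↔
        (Set.InjOn Sigma.fst (F : Set (Σ f : D.E, Fin (w f))) ∧ (F.image Sigma.fst).card = 3 ∧
          ¬ D.Disconnects (F.image Sigma.fst)) := by
      intro F
      constructor
      · rintro ⟨h1, h2⟩
        have hinj : Set.InjOn Sigma.fst (F : Set (Σ f : D.E, Fin (w f))) := by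
          rintro ⟨e, i⟩ hi ⟨e', j⟩ hj hij
          simp only at hij
          subst hij
          rcases lt_trichotomy i j with h | h | h
          · exact absurd (sub_disc_two D w F e i j h hi hj) h2
          · rw [h]
          · exact absurd (sub_disc_two D w F e j i h hj hi) h2
        refine ⟨hinj, ?_, fun h => h2 (sub_disc_lift D w F h)⟩
        rw [← h1]
        exact card_image_of_injOn hinj
      · rintro ⟨hinj, h1, h2⟩
        refine ⟨?_, fun h => h2 (sub_disc_drop D w F hinj h)⟩
        rw [← h1]
        exact (card_image_of_injOn hinj).symm
    have hfe : ((univ : Finset (Finset (subdivide D w).E)).filter fun F => F.card = 3 ∧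
      ¬ (subdivide D w).Disconnects F).card = ((univ : Finset (Finset (Σ f : D.E, Fin (w f)))).filter
        fun F : Finset (Σ f : D.E, Fin (w f)) => (Set.InjOn Sigma.fst (F : Set (Σ f : D.E, Fin (w f))) ∧
          (F.image Sigma.fst).card = 3 ∧ ¬ D.Disconnects (F.image Sigma.fst))).card :=
      Finset.card_bij (fun F _ => F)
        (fun F hF => mem_filter.2 ⟨mem_univ _, (hchar F).1 (mem_filter.1 hF).2⟩)
        (fun _ _ _ _ h => h)
        (fun F hF => ⟨F, mem_filter.2 ⟨mem_univ _, (hchar F).2 (mem_filter.1 hF).2⟩, rfl⟩)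
    refine hfe.trans ?_
    rw [Finset.card_eq_sum_card_fiberwise (f := fun F : Finset (Σ f : D.E, Fin (w f)) => F.image Sigma.fst)
      (t := (powersetCard 3 (univ : Finset D.E)).filter (fun T => ¬ D.Disconnects T))]
    · apply sum_congr rfl
      intro T hT
      simp only [mem_filter, mem_powersetCard, subset_univ, true_and] at hT
      rw [← card_transversal w T]
      congr 1
      ext F
      simp only [mem_filter, mem_univ, true_and]
      constructor
      · rintro ⟨⟨h1, h2⟩, h3⟩
        exact ⟨h1, h3⟩
      · rintro ⟨h1, rfl⟩
        exact ⟨⟨h1, hT⟩, rfl⟩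
    · intro F hF
      simp only [coe_filter, Set.mem_ofPred_eq, mem_univ, true_and] at hF
      simp only [coe_filter, Set.mem_ofPred_eq, mem_powersetCard, subset_univ, true_and]
      exact hF.2
  have hdisc : ∑ T ∈ (powersetCard 3 (univ : Finset D.E)).filter (fun T => D.Disconnects T), ∏ e ∈ T, w e
      = ∑ u, ∏ e ∈ incE D u, w e := by
    have : (powersetCard 3 (univ : Finset D.E)).filter (fun T => D.Disconnects T) =
        univ.image (incE D) := by
      ext T
      simp only [mem_filter, mem_powersetCard, subset_univ, true_and, mem_image, mem_univ]
      constructor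
      · rintro ⟨h1, h2⟩
        obtain ⟨u, hu⟩ := (hD.disc T h1).1 h2
        exact ⟨u, hu.symm⟩
      · rintro ⟨u, rfl⟩
        exact ⟨hD.inc3 u, (hD.disc _ (hD.inc3 u)).2 ⟨u, rfl⟩⟩
    rw [this, sum_image (hD.incInj.injOn)]
  have htot : (subdivide D w).d 3 + ((univ : Finset (Finset (subdivide D w).E)).filter fun F => F.card = 3 ∧
      ¬ (subdivide D w).Disconnects F).card = (∑ e, w e).choose 3 := by
    have hcE : Fintype.card (subdivide D w).E = ∑ e, w e := by
      change Fintype.card (Σ f : D.E, Fin (w f)) = _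
      rw [Fintype.card_sigma]; simp
    rw [← hcE, ← card_univ, ← card_powersetCard]
    unfold Multigraph.d
    rw [← card_union_of_disjoint]
    · congr 1
      ext F
      simp only [mem_union, mem_filter, mem_univ, true_and, mem_powersetCard, subset_univ]
      tauto
    · rw [Finset.disjoint_left]
      intro F
      simp only [mem_filter, mem_univ, true_and]
      tauto
  have hsplit := sum_filter_add_sum_filter_not (powersetCard 3 (univ : Finset D.E))
    (fun T => D.Disconnects T) (fun T => ∏ e ∈ T, w e)
  rw [← hsplit, hdisc, ← htot, ← hconn]
  ring

def grOf (D : Multigraph) : SimpleGraph D.V where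
  Adj u v := u ≠ v ∧ ∃ e, (D.src e = u ∧ D.tgt e = v) ∨ (D.src e = v ∧ D.tgt e = u)
  symm := ⟨by
    rintro u v ⟨h, e, he⟩
    exact ⟨h.symm, e, he.symm⟩⟩
  loopless := ⟨by
    rintro u ⟨h, _⟩
    exact h rfl⟩

lemma no_violator (k : ℕ) (D : Multigraph) (hD : GoodG k D) (U : Set D.V) :
    ¬ (grOf D).IsTutteViolator U := by
  unfold SimpleGraph.IsTutteViolator
  rw [not_lt]
  set S := (⊤ : (grOf D).Subgraph).deleteVerts U with hS
  have hverts : ∀ v, v ∈ S.verts ↔ v ∉ U := by intro v; simp [hS]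
  have hadj : ∀ (x y : S.verts), (grOf D).Adj x y → S.coe.Adj x y := by
    intro x y h
    have hx := (hverts _).1 x.2
    have hy := (hverts _).1 y.2
    simp [hS, h, hx, hy]
  have : Fintype S.coe.ConnectedComponent := Fintype.ofFinite _
  let A : S.coe.ConnectedComponent → Finset D.V := fun C =>
    univ.filter (fun v => ∃ h : v ∈ S.verts, S.coe.connectedComponentMk ⟨v, h⟩ = C)
  have hAcard : ∀ C, (A C).card = C.supp.ncard := by
    intro C
    have : ((A C : Finset D.V) : Set D.V) = Subtype.val '' C.supp := by
      ext v
      simp [A]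
    rw [← Set.ncard_coe_finset, this, Set.ncard_image_of_injective _ Subtype.val_injective]
  have hcutA : ∀ C e, e ∈ D.cutEdges (A C) → (D.src e ∈ A C ∧ D.tgt e ∈ U) ∨ (D.tgt e ∈ A C ∧ D.src e ∈ U) := by
    intro C e he
    simp only [Multigraph.cutEdges, mem_filter, mem_univ, true_and] at he
    rcases he with ⟨h1, h2⟩ | ⟨h1, h2⟩
    · left
      refine ⟨h1, ?_⟩
      by_contra hU
      apply h2
      simp only [A, mem_filter, mem_univ, true_and] at h1 ⊢
      obtain ⟨h3, rfl⟩ := h1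
      refine ⟨(hverts _).2 hU, ?_⟩
      apply SimpleGraph.ConnectedComponent.sound
      apply SimpleGraph.Adj.reachable
      apply hadj
      exact ⟨(hD.noloop e).symm, e, Or.inr ⟨rfl, rfl⟩⟩
    · right
      refine ⟨h2, ?_⟩
      by_contra hU
      apply h1
      simp only [A, mem_filter, mem_univ, true_and] at h2 ⊢
      obtain ⟨h3, rfl⟩ := h2
      refine ⟨(hverts _).2 hU, ?_⟩
      apply SimpleGraph.ConnectedComponent.sound
      apply SimpleGraph.Adj.reachable
      apply hadj
      exact ⟨(hD.noloop e), e, Or.inl ⟨rfl, rfl⟩⟩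
  have hAU : ∀ C v, v ∈ A C → v ∉ U := by
    intro C v hv
    simp only [A, mem_filter, mem_univ, true_and] at hv
    obtain ⟨h, _⟩ := hv
    exact (hverts _).1 h
  have hAA : ∀ C C' v, v ∈ A C → v ∈ A C' → C = C' := by
    intro C C' v hv hv'
    simp only [A, mem_filter, mem_univ, true_and] at hv hv'
    obtain ⟨h, rfl⟩ := hv
    obtain ⟨h', rfl⟩ := hv'
    rfl
  let O : Finset S.coe.ConnectedComponent := univ.filter (fun C => Odd C.supp.ncard)
  have hO : S.coe.oddComponents.ncard = O.card := by
    rw [← Set.ncard_coe_finset]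
    congr 1
    ext C
    simp [O]
  have h1 : ∀ C ∈ O, 3 ≤ (D.cutEdges (A C)).card := by
    intro C hC
    have hodd : Odd (A C).card := by
      rw [hAcard]
      simpa [O] using hC
    apply hD.cut3
    · rw [← card_pos]
      exact hodd.pos
    · intro h
      rw [h, card_univ, hD.nV] at hodd
      rw [Nat.odd_iff] at hodd
      omega
  have h2 : O.card * 3 ≤ ∑ C ∈ O, (D.cutEdges (A C)).card := by
    rw [← smul_eq_mul]
    exact Finset.card_nsmul_le_sum O _ 3 h1
  have h3 : ∑ C ∈ O, (D.cutEdges (A C)).card = (O.biUnion (fun C => D.cutEdges (A C))).card := by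
    rw [card_biUnion]
    intro C _ C' _ hne
    refine Finset.disjoint_left.2 ?_
    intro e he he'
    apply hne
    have a1 := hcutA _ _ he
    have a2 := hcutA _ _ he'
    rcases a1 with ⟨a1, b1⟩ | ⟨a1, b1⟩ <;> rcases a2 with ⟨a2, b2⟩ | ⟨a2, b2⟩
    · exact hAA _ _ _ a1 a2
    · exact absurd b1 (hAU _ _ a2)
    · exact absurd b1 (hAU _ _ a2)
    · exact hAA _ _ _ a1 a2
  have h4 : (O.biUnion (fun C => D.cutEdges (A C))).card ≤ (U.toFinset.biUnion (incE D)).card := by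
    apply card_le_card
    intro e he
    rw [mem_biUnion] at he ⊢
    obtain ⟨C, _, he⟩ := he
    rcases hcutA _ _ he with ⟨a, b⟩ | ⟨a, b⟩
    · exact ⟨_, by simpa using b, by simp [incE]⟩
    · exact ⟨_, by simpa using b, by simp [incE]⟩
  have h5 : (U.toFinset.biUnion (incE D)).card ≤ U.toFinset.card * 3 :=
    card_biUnion_le_card_mul _ _ _ (fun u _ => (hD.inc3 u).le)
  rw [hO, Set.ncard_eq_toFinset_card']
  omega

lemma petersen_thm (k : ℕ) (D : Multigraph) (hD : GoodG k D) :
    ∃ M : Finset D.E, ∀ u, (incE D u ∩ M).card = 1 := by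
  obtain ⟨P, hP, hsp⟩ := SimpleGraph.tutte.2 (no_violator k D hD)
  have hex : ∀ u, ∃ v, P.Adj u v ∧ ∀ y, P.Adj u y → y = v := by
    intro u
    obtain ⟨v, h1, h2⟩ := hP (hsp u)
    exact ⟨v, h1, h2⟩
  have hch : ∀ p : Sym2 D.V, ∃ e : Option D.E, p ∈ P.edgeSet → ∃ e', e = some e' ∧ s(D.src e', D.tgt e') = p := by
    intro p
    by_cases hp : p ∈ P.edgeSet
    · induction p using Sym2.ind with
      | _ x y =>
        have := P.adj_sub hp
        obtain ⟨_, e, he⟩ := this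
        refine ⟨some e, fun _ => ⟨e, rfl, ?_⟩⟩
        rw [Sym2.eq_iff]
        exact he
    · exact ⟨none, fun h => absurd h hp⟩
  choose g hg using hch
  refine ⟨univ.filter (fun e => s(D.src e, D.tgt e) ∈ P.edgeSet ∧ g s(D.src e, D.tgt e) = some e), ?_⟩
  intro u
  obtain ⟨v, huv, huniq⟩ := hex u
  obtain ⟨e, h1, h2⟩ := hg s(u, v) huv
  rw [card_eq_one]
  refine ⟨e, ?_⟩
  ext f
  simp only [incE, mem_inter, mem_filter, mem_univ, true_and, mem_singleton]
  constructor
  · rintro ⟨h3, h4, h5⟩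
    have : s(D.src f, D.tgt f) = s(u, v) := by
      rcases h3 with h3 | h3
      · rw [h3] at h4 ⊢
        have h6 : P.Adj u (D.tgt f) := h4
        rw [huniq _ h6]
      · rw [h3] at h4 ⊢
        have : P.Adj (D.src f) u := h4
        rw [huniq _ this.symm]
        exact Sym2.eq_swap
    rw [this, h1] at h5
    exact (Option.some.inj h5).symm
  · rintro rfl
    refine ⟨?_, ?_, ?_⟩
    · rw [Sym2.eq_iff] at h2
      tauto
    · rw [h2]; exact huv
    · rw [h2]; exact h1

lemma sum_inc (k : ℕ) (D : Multigraph) (hD : GoodG k D) (S : Finset D.E) :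
    ∑ u, (incE D u ∩ S).card = 2 * S.card := by
  have h1 := Finset.card_eq_sum_card_fiberwise (f := D.src) (s := S) (t := univ) (by simp)
  have h2 := Finset.card_eq_sum_card_fiberwise (f := D.tgt) (s := S) (t := univ) (by simp)
  have : ∀ u, (incE D u ∩ S).card = (S.filter fun e => D.src e = u).card +
      (S.filter fun e => D.tgt e = u).card := by
    intro u
    rw [← card_union_of_disjoint]
    · congr 1
      ext e
      simp [incE]
      tauto
    · rw [Finset.disjoint_left]
      intro e
      have := hD.noloop e
      simp only [mem_filter]
      rintro ⟨_, rfl⟩ ⟨_, h⟩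
      exact this h.symm
  simp only [this]
  rw [sum_add_distrib, ← h1, ← h2]
  ring

lemma compl_inc (k : ℕ) (D : Multigraph) (hD : GoodG k D) (S : Finset D.E) (u : D.V) :
    (incE D u ∩ Sᶜ).card + (incE D u ∩ S).card = 3 := by
  rw [← hD.inc3 u, ← card_union_of_disjoint]
  · rw [← inter_union_distrib_left, union_comm]; simp
  · rw [Finset.disjoint_left]
    intro e
    simp
    tauto

/-- matchings of size at least k/2 avoiding a perfect matching -/
lemma exists_N (k : ℕ) (D : Multigraph) (hD : GoodG k D) (M : Finset D.E)
    (hM : ∀ u, (incE D u ∩ M).card = 1) :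
    ∃ N : Finset D.E, Disjoint M N ∧ (∀ u, (incE D u ∩ N).card ≤ 1) ∧ k ≤ 2 * N.card := by
  obtain ⟨N, hN, hmax⟩ := Finset.exists_max_image
    (univ.filter fun N : Finset D.E => Disjoint M N ∧ ∀ u, (incE D u ∩ N).card ≤ 1)
    Finset.card ⟨∅, by simp⟩
  simp only [mem_filter, mem_univ, true_and] at hN hmax
  refine ⟨N, hN.1, hN.2, ?_⟩
  have hcM : M.card = k := by
    have := sum_inc k D hD M
    simp only [hM] at this
    rw [sum_const, card_univ, hD.nV] at this
    simp at this
    omega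
  have hcov : Mᶜ ⊆ N.biUnion (fun f => (incE D (D.src f) ∩ Mᶜ) ∪ (incE D (D.tgt f) ∩ Mᶜ)) := by
    intro e he
    by_contra hcon
    simp only [mem_biUnion, not_exists, not_and] at hcon
    have hmem : ∀ u, e ∈ incE D u → ∀ f ∈ N, f ∉ incE D u := by
      intro u hu f hf hfu
      apply hcon f hf
      simp only [incE, mem_filter, mem_univ, true_and] at hfu
      rcases hfu with rfl | rfl
      · exact mem_union_left _ (mem_inter.2 ⟨hu, he⟩)
      · exact mem_union_right _ (mem_inter.2 ⟨hu, he⟩)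
    have heN : e ∉ N := by
      intro heN
      exact hmem (D.src e) (by simp [incE]) e heN (by simp [incE])
    have := hmax (insert e N) ⟨?_, ?_⟩
    · rw [card_insert_of_notMem heN] at this
      omega
    · rw [disjoint_insert_right]
      exact ⟨by simpa using he, hN.1⟩
    · intro u
      by_cases hu : e ∈ incE D u
      · rw [inter_insert_of_mem hu]
        have : incE D u ∩ N = ∅ := by
          ext f
          simp only [mem_inter, notMem_empty, iff_false, not_and]
          intro h1 h2
          exact hmem u hu f h2 h1
        rw [this]; simp
      · rw [inter_insert_of_notMem hu]
        exact hN.2 u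
  have h2 := (card_le_card hcov).trans (card_biUnion_le_card_mul _ _ 4 (by
    intro f _
    refine (card_union_le _ _).trans ?_
    have a1 := compl_inc k D hD M (D.src f)
    have a2 := compl_inc k D hD M (D.tgt f)
    rw [hM] at a1 a2
    omega))
  rw [card_compl, hcM, hD.nE] at h2
  omega

lemma exists_half (k : ℕ) (D : Multigraph) (hD : GoodG k D) (s : ℕ) (hs : 2 * s ≤ 3 * k) :
    ∃ S : Finset D.E, S.card = s ∧ ((s ≤ k ∧ ∀ u, (incE D u ∩ S).card ≤ 1) ∨
      (k < s ∧ ∀ u, 1 ≤ (incE D u ∩ S).card ∧ (incE D u ∩ S).card ≤ 2)) := by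
  obtain ⟨M, hM⟩ := petersen_thm k D hD
  have hcM : M.card = k := by
    have := sum_inc k D hD M
    simp only [hM] at this
    rw [sum_const, card_univ, hD.nV] at this
    simp at this
    omega
  rcases le_or_gt s k with h | h
  · obtain ⟨S, hS, hc⟩ := Finset.exists_subset_card_eq (s := M) (n := s) (by omega)
    refine ⟨S, hc, Or.inl ⟨h, fun u => ?_⟩⟩
    rw [← hM u]
    exact card_le_card (inter_subset_inter_left hS)
  · obtain ⟨N, hN1, hN2, hN3⟩ := exists_N k D hD M hM
    obtain ⟨S, hS, hc⟩ := Finset.exists_subset_card_eq (s := N) (n := s - k) (by omega)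
    have hdis : Disjoint M S := hN1.mono_right hS
    refine ⟨M ∪ S, ?_, Or.inr ⟨h, fun u => ?_⟩⟩
    · rw [card_union_of_disjoint hdis, hc, hcM]; omega
    · have h1 : (incE D u ∩ S).card ≤ 1 := (card_le_card (inter_subset_inter_left hS)).trans (hN2 u)
      rw [inter_union_distrib_left]
      constructor
      · rw [← hM u]
        exact card_le_card subset_union_left
      · refine (card_union_le _ _).trans ?_
        rw [hM u]
        omega

lemma exists_bal (k : ℕ) (D : Multigraph) (hD : GoodG k D) (s : ℕ) (hs : s ≤ 3 * k) :
    ∃ S : Finset D.E, S.card = s ∧ ∃ a, a ≤ 2 ∧ (2 * k ≤ s → a = 2) ∧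
      ∀ u, a ≤ (incE D u ∩ S).card ∧ (incE D u ∩ S).card ≤ a + 1 := by
  rcases le_or_gt (2 * s) (3 * k) with h | h
  · obtain ⟨S, h1, h2⟩ := exists_half k D hD s h
    have := hD.hk
    rcases h2 with ⟨h2, h3⟩ | ⟨h2, h3⟩
    · exact ⟨S, h1, 0, by omega, by omega, fun u => ⟨by omega, by simpa using h3 u⟩⟩
    · exact ⟨S, h1, 1, by omega, by omega, h3⟩
  · obtain ⟨S, h1, h2⟩ := exists_half k D hD (3 * k - s) (by omega)
    refine ⟨Sᶜ, by rw [card_compl, hD.nE]; omega, ?_⟩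
    have hc := compl_inc k D hD S
    rcases h2 with ⟨h2, h3⟩ | ⟨h2, h3⟩
    · refine ⟨2, by omega, by omega, fun u => ?_⟩
      have := hc u; have := h3 u
      omega
    · refine ⟨1, by omega, by omega, fun u => ?_⟩
      have := hc u; have := h3 u
      omega

lemma zeroAcyclic_of (k : ℕ) (D : Multigraph) (hD : GoodG k D) (w : D.E → ℕ)
    (hZ : ∀ u, (incE D u ∩ univ.filter (fun e => w e = 0)).card ≤ 1) : ZeroAcyclic D w := by
  unfold ZeroAcyclic
  set Z := univ.filter (fun e => w e = 0) with hZdef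
  have huniq : ∀ u e e', e ∈ Z → e' ∈ Z → e ∈ incE D u → e' ∈ incE D u → e = e' := by
    intro u e e' h1 h2 h3 h4
    exact card_le_one.1 (hZ u) e (mem_inter.2 ⟨h3, h1⟩) e' (mem_inter.2 ⟨h4, h2⟩)
  let f : D.V → D.V := fun v => if h : ∃ e ∈ Z, D.tgt e = v then D.src h.choose else v
  have f1 : ∀ e ∈ Z, f (D.tgt e) = D.src e := by
    intro e he
    have h : ∃ e' ∈ Z, D.tgt e' = D.tgt e := ⟨e, he, rfl⟩
    simp only [f, dif_pos h]
    rw [huniq (D.tgt e) h.choose e h.choose_spec.1 he (by simp [incE, h.choose_spec.2]) (by simp [incE])]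
  have f2 : ∀ e ∈ Z, ¬ ∃ e' ∈ Z, D.tgt e' = D.src e := by
    rintro e he ⟨e', he', h⟩
    have := huniq (D.src e) e e' he he' (by simp [incE]) (by simp [incE, h])
    subst this
    exact hD.noloop _ h.symm
  have f3 : ∀ v, (¬ ∃ e ∈ Z, D.tgt e = v) → f v = v := by
    intro v h
    simp only [f, dif_neg h]
  have hresp : ∀ a b, zeroRel D w a b → f a = f b := by
    rintro a b ⟨e, he, rfl, rfl⟩
    have heZ : e ∈ Z := by simp [hZdef, he]
    rw [f1 e heZ, f3 _ (f2 e heZ)]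
  let g : {v : D.V // v ∈ (Z.image D.tgt)ᶜ} → Quot (zeroRel D w) := fun v => Quot.mk _ v.1
  have hnot : ∀ v, v ∈ (Z.image D.tgt)ᶜ ↔ ¬ ∃ e ∈ Z, D.tgt e = v := by
    intro v; simp
  have hg : Function.Bijective g := by
    constructor
    · rintro ⟨a, ha⟩ ⟨b, hb⟩ hab
      have := congrArg (Quot.lift f hresp) hab
      simp only [g] at this
      rw [f3 _ ((hnot a).1 ha), f3 _ ((hnot b).1 hb)] at this
      exact Subtype.ext this
    · intro q
      induction q using Quot.ind with
      | mk v =>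
        by_cases h : ∃ e ∈ Z, D.tgt e = v
        · obtain ⟨e, he, rfl⟩ := h
          refine ⟨⟨D.src e, (hnot _).2 (f2 e he)⟩, ?_⟩
          exact Quot.sound ⟨e, by simpa [hZdef] using he, rfl, rfl⟩
        · exact ⟨⟨v, (hnot _).2 h⟩, rfl⟩
  have hc := Fintype.card_of_bijective hg
  rw [Fintype.card_coe, card_compl, card_image_of_injOn] at hc
  · have h1 : Z.card ≤ Fintype.card D.V := by
      rw [← card_image_of_injOn (f := D.tgt) (s := Z), ← card_univ]
      · exact card_le_card (subset_univ _)
      · intro e he e' he' h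
        exact huniq (D.tgt e) e e' he he' (by simp [incE]) (by simp [incE, h])
    have hc' : Fintype.card D.V - Z.card = @Fintype.card (Quot (zeroRel D w)) quotFintype := by
      rw [hc]
    omega
  · intro e he e' he' h
    exact huniq (D.tgt e) e e' he he' (by simp [incE]) (by simp [incE, h])

lemma shape (k : ℕ) (D : Multigraph) (hD : GoodG k D) (w : D.E → ℕ) (m : ℕ)
    (hs : ∑ e, w e = m) (hb : BalancedWeights w) :
    (∀ e, w e = m / (3 * k) ∨ w e = m / (3 * k) + 1) ∧
      (univ.filter fun e => w e = m / (3 * k) + 1).card = m % (3 * k) := by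
  have hk := hD.hk
  have hne : (univ : Finset D.E).Nonempty := by
    rw [← card_pos, card_univ, hD.nE]; omega
  obtain ⟨e0, _, he0⟩ := Finset.exists_min_image univ w hne
  have h1 : ∀ e, w e = w e0 ∨ w e = w e0 + 1 := by
    intro e
    have := he0 e (mem_univ _)
    have := hb e e0
    omega
  set S := univ.filter fun e => w e = w e0 + 1 with hS
  have h2 : m = 3 * k * w e0 + S.card := by
    rw [← hs, ← hD.nE, hS, card_filter, ← card_univ, ← smul_eq_mul, ← sum_const, ← sum_add_distrib]
    apply sum_congr rfl
    intro e _
    rcases h1 e with h | h <;> simp [h]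
  have h3 : S.card < 3 * k := by
    rw [← hD.nE, ← card_univ]
    apply card_lt_card
    rw [ssubset_univ_iff]
    intro h
    have : e0 ∈ S := by rw [h]; simp
    simp [hS] at this
  have h4 : m / (3 * k) = w e0 := by
    rw [h2, Nat.mul_add_div (by omega), Nat.div_eq_of_lt h3]; simp
  have h5 : m % (3 * k) = S.card := by
    rw [h2, Nat.mul_add_mod, Nat.mod_eq_of_lt h3]
  rw [h4, h5]
  exact ⟨h1, rfl⟩

def phi (b h : ℕ) : ℕ := b ^ (3 - h) * (b + 1) ^ h

lemma prod_phi (k : ℕ) (D : Multigraph) (hD : GoodG k D) (w : D.E → ℕ) (b : ℕ)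
    (hb : ∀ e, w e = b ∨ w e = b + 1) (u : D.V) :
    ∏ e ∈ incE D u, w e = phi b (incE D u ∩ univ.filter fun e => w e = b + 1).card := by
  have h1 : ∀ e ∈ incE D u, w e = if w e = b + 1 then b + 1 else b := by
    intro e _
    rcases hb e with h | h <;> simp [h]
  rw [prod_congr rfl h1, prod_ite, prod_const, prod_const]
  have h2 : (incE D u).filter (fun e => w e = b + 1) = incE D u ∩ univ.filter fun e => w e = b + 1 := by
    ext; simp
  have h3 : (incE D u).filter (fun e => ¬ w e = b + 1) = incE D u ∩ (univ.filter fun e => w e = b + 1)ᶜ := by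
    ext; simp
  have h4 := compl_inc k D hD (univ.filter fun e => w e = b + 1) u
  rw [h2, h3]
  unfold phi
  rw [mul_comm]
  congr 2
  omega

lemma tangent (b a h : ℕ) (ha : a ≤ 2) (hh : h ≤ 3) :
    (phi b a : ℤ) + ((h : ℤ) - a) * ((phi b (a+1) : ℤ) - phi b a) ≤ phi b h := by
  have hb : (0 : ℤ) ≤ b := by positivity
  unfold phi
  interval_cases a <;> interval_cases h <;> push_cast <;> norm_num <;> nlinarith [mul_nonneg hb hb]

lemma tangent_eq (b a h : ℕ) (h1 : a ≤ h) (h2 : h ≤ a + 1) :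
    (phi b a : ℤ) + ((h : ℤ) - a) * ((phi b (a+1) : ℤ) - phi b a) = phi b h := by
  obtain rfl | rfl : h = a ∨ h = a + 1 := by omega
  · ring
  · push_cast; ring

lemma tangent_lt (b a h : ℕ) (ha : a ≤ 2) (hh : h ≤ 3) (hs : 1 ≤ b ∨ a = 2)
    (hn : ¬ (a ≤ h ∧ h ≤ a + 1)) :
    (phi b a : ℤ) + ((h : ℤ) - a) * ((phi b (a+1) : ℤ) - phi b a) < phi b h := by
  have hb : (0 : ℤ) ≤ b := by positivity
  have hb' : 1 ≤ b → (1 : ℤ) ≤ b := by intro h; exact_mod_cast h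
  unfold phi
  interval_cases a <;> interval_cases h <;> simp at hn <;> simp at hs <;> push_cast <;> norm_num <;>
    nlinarith [mul_nonneg hb hb]

lemma esymm_eq (D : Multigraph) (w w' : D.E → ℕ) (b : ℕ)
    (hb : ∀ e, w e = b ∨ w e = b + 1) (hb' : ∀ e, w' e = b ∨ w' e = b + 1)
    (hc : (univ.filter fun e => w e = b + 1).card = (univ.filter fun e => w' e = b + 1).card) :
    ∑ T ∈ powersetCard 3 (univ : Finset D.E), ∏ e ∈ T, w e =
    ∑ T ∈ powersetCard 3 (univ : Finset D.E), ∏ e ∈ T, w' e := by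
  rw [← Finset.esymm_map_val, ← Finset.esymm_map_val]
  congr 1
  have key : ∀ v : D.E → ℕ, (∀ e, v e = b ∨ v e = b + 1) → (univ : Finset D.E).val.map v =
      Multiset.replicate (univ.filter fun e => v e = b + 1).card (b + 1) +
      Multiset.replicate (Fintype.card D.E - (univ.filter fun e => v e = b + 1).card) b := by
    intro v hv
    have h1 := Multiset.filter_add_not (fun x => x = b + 1) ((univ : Finset D.E).val.map v)
    have h2 : ((univ : Finset D.E).val.map v).filter (fun x => x = b + 1) =
        Multiset.replicate (univ.filter fun e => v e = b + 1).card (b + 1) := by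
      rw [Multiset.eq_replicate]
      constructor
      · rw [Multiset.filter_map, Multiset.card_map]; rfl
      · intro x hx
        exact (Multiset.mem_filter.1 hx).2
    have h3 : ((univ : Finset D.E).val.map v).filter (fun x => ¬ x = b + 1) =
        Multiset.replicate (Fintype.card D.E - (univ.filter fun e => v e = b + 1).card) b := by
      rw [Multiset.eq_replicate]
      constructor
      · have := congrArg Multiset.card h1
        rw [Multiset.card_add, h2, Multiset.card_replicate, Multiset.card_map, Finset.card_val, card_univ] at this
        omega
      · intro x hx
        rw [Multiset.mem_filter, Multiset.mem_map] at hx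
        obtain ⟨⟨e, _, rfl⟩, h⟩ := hx
        have := hv e
        tauto
    rw [← h1, h2, h3]
  rw [key w hb, key w' hb', hc]

lemma incCount_eq (k : ℕ) (D : Multigraph) (hD : GoodG k D) (w : D.E → ℕ) (u : D.V) (c : ℕ) :
    incCount D w u c = (incE D u ∩ univ.filter fun e => w e = c).card := by
  unfold incCount
  rw [← card_union_of_disjoint]
  · congr 1
    ext e
    simp [incE]
    tauto
  · rw [Finset.disjoint_left]
    intro e
    have := hD.noloop e
    simp only [mem_filter]
    rintro ⟨_, rfl, _⟩ ⟨_, h, _⟩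
    exact this h.symm

lemma piV_bal (k : ℕ) (D : Multigraph) (hD : GoodG k D) (w : D.E → ℕ) (m : ℕ)
    (hb : ∀ e, w e = m / (3 * k) ∨ w e = m / (3 * k) + 1) :
    BalancedPiV D w (stdWeight m k) ↔ ∀ u v,
      (incE D u ∩ univ.filter fun e => w e = m / (3 * k) + 1).card ≤
      (incE D v ∩ univ.filter fun e => w e = m / (3 * k) + 1).card + 1 := by
  have hk := hD.hk
  have hm := Nat.div_add_mod m (3 * k)
  have hlt := Nat.mod_lt m (show 3 * k > 0 by omega)
  set b := m / (3 * k) with hbdef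
  set s := m % (3 * k) with hsdef
  have hempty : ∀ u c, c ≠ b → c ≠ b + 1 → incCount D w u c = 0 := by
    intro u c h1 h2
    rw [incCount_eq k D hD, card_eq_zero]
    ext e
    have := hb e
    simp only [mem_inter, mem_filter, mem_univ, true_and, notMem_empty, iff_false]
    rintro ⟨_, rfl⟩
    tauto
  unfold BalancedPiV
  rcases le_or_gt (2 * s) (3 * k) with h | h
  · have hq : stdWeight m k = b := by
      unfold stdWeight
      have : 2 * m + 3 * k - 1 = 6 * k * b + (2 * s + 3 * k - 1) := by
        have : 6 * k * b = 2 * (3 * k * b) := by ring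
        omega
      rw [this, Nat.mul_add_div (by omega), Nat.div_eq_of_lt (by omega)]; simp
    have hpi : ∀ u, piV D w (stdWeight m k) u =
        ((incE D u ∩ univ.filter fun e => w e = b + 1).card : ℤ) := by
      intro u
      unfold piV
      rw [hq, incCount_eq k D hD]
      split_ifs with h0
      · simp
      · rw [hempty u (b - 1) (by omega) (by omega)]; simp
    simp only [hpi]
    exact ⟨fun h u v => by have := h u v; omega, fun h u v => by have := h u v; omega⟩
  · have hq : stdWeight m k = b + 1 := by
      unfold stdWeight
      have : 2 * m + 3 * k - 1 = 6 * k * (b + 1) + (2 * s - 3 * k - 1) := by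
        have : 6 * k * (b + 1) = 2 * (3 * k * b) + 6 * k := by ring
        omega
      rw [this, Nat.mul_add_div (by omega), Nat.div_eq_of_lt (by omega)]
    have hpi : ∀ u, piV D w (stdWeight m k) u =
        ((incE D u ∩ univ.filter fun e => w e = b + 1).card : ℤ) - 3 := by
      intro u
      unfold piV
      rw [hq, hempty u (b + 1 + 1) (by omega) (by omega), if_neg (Nat.succ_ne_zero b), Nat.add_sub_cancel,
        incCount_eq k D hD]
      have h4 := compl_inc k D hD (univ.filter fun e => w e = b + 1) u
      have h5 : (univ.filter fun e => w e = b + 1)ᶜ = univ.filter fun e => w e = b := by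
        ext e
        have := hb e
        simp only [mem_compl, mem_filter, mem_univ, true_and]
        omega
      rw [h5] at h4
      push_cast
      omega
    simp only [hpi]
    exact ⟨fun h u v => by have := h u v; omega, fun h u v => by have := h u v; omega⟩

lemma sum_tangent (k : ℕ) (D : Multigraph) (hD : GoodG k D) (S : Finset D.E) (a : ℕ) (x y : ℤ) :
    ∑ u, (x + (((incE D u ∩ S).card : ℤ) - a) * y) = 2 * k * (x - a * y) + 2 * S.card * y := by
  have h := sum_inc k D hD S
  have h' : ∑ u, ((incE D u ∩ S).card : ℤ) = 2 * S.card := by exact_mod_cast h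
  have : ∀ u, x + (((incE D u ∩ S).card : ℤ) - a) * y = (x - a * y) + ((incE D u ∩ S).card : ℤ) * y := by
    intro u; ring
  simp only [this]
  rw [sum_add_distrib, ← sum_mul, h', sum_const, card_univ, hD.nV]
  simp

lemma inc_le3 (k : ℕ) (D : Multigraph) (hD : GoodG k D) (S : Finset D.E) (u : D.V) :
    (incE D u ∩ S).card ≤ 3 := by
  have := compl_inc k D hD S u
  omega

/-- let m > k ≥ 2, D ∈ 𝒟_k with only trivial 3-bonds, and w a balanced
weighting of D of total size m with implied graph G ∈ ℬ_m(D). (a) If the π^v-values of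
D are balanced then G minimizes d₃ within ℬ_m(D); (b) if moreover m ≥ 2k, then G
minimizes d₃ within ℬ_m(D) iff the π^v-values are balanced. -/
theorem d3_min_in_Bm (k m : ℕ) (hk : 2 ≤ k) (hm : k < m)
    (D : Multigraph) (hD : memDk k D) (htriv : OnlyTrivialThreeBonds D)
    (w : D.E → ℕ) (hw : IsBalancedWeighting D w m) :
    (BalancedPiV D w (stdWeight m k) →
      ∀ w' : D.E → ℕ, IsBalancedWeighting D w' m →
        (subdivide D w).d 3 ≤ (subdivide D w').d 3) ∧
    (2 * k ≤ m →
      ((∀ w' : D.E → ℕ, IsBalancedWeighting D w' m →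
          (subdivide D w).d 3 ≤ (subdivide D w').d 3) ↔
        BalancedPiV D w (stdWeight m k))) := by
  have hG := goodG_of k hk D hD htriv
  have hkpos : 0 < 3 * k := by omega
  have hmod := Nat.mod_lt m hkpos
  have hdm := Nat.div_add_mod m (3 * k)
  obtain ⟨hws, hwb, hwz⟩ := hw
  obtain ⟨hb, hc⟩ := shape k D hG w m hws hwb
  have hd : ∀ w' : D.E → ℕ, IsBalancedWeighting D w' m →
      ((subdivide D w).d 3 ≤ (subdivide D w').d 3 ↔
        ∑ u, phi (m / (3 * k)) (incE D u ∩ univ.filter fun e => w e = m / (3 * k) + 1).card ≤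
        ∑ u, phi (m / (3 * k)) (incE D u ∩ univ.filter fun e => w' e = m / (3 * k) + 1).card) := by
    rintro w' ⟨hws', hwb', -⟩
    obtain ⟨hb', hc'⟩ := shape k D hG w' m hws' hwb'
    have e1 := d3_formula k D hG w
    have e2 := d3_formula k D hG w'
    have e3 := esymm_eq D w w' (m / (3 * k)) hb hb' (by rw [hc, hc'])
    rw [hws] at e1
    rw [hws'] at e2
    simp only [prod_phi k D hG w _ hb] at e1
    simp only [prod_phi k D hG w' _ hb'] at e2
    omega
  rw [piV_bal k D hG w m hb]
  have partA : (∀ u v, (incE D u ∩ univ.filter fun e => w e = m / (3 * k) + 1).card ≤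
      (incE D v ∩ univ.filter fun e => w e = m / (3 * k) + 1).card + 1) →
      ∀ w' : D.E → ℕ, IsBalancedWeighting D w' m →
        (subdivide D w).d 3 ≤ (subdivide D w').d 3 := by
    intro hbal w' hw'
    rw [hd w' hw']
    obtain ⟨hws', hwb', -⟩ := hw'
    obtain ⟨hb', hc'⟩ := shape k D hG w' m hws' hwb'
    set b := m / (3 * k)
    set S := univ.filter fun e => w e = b + 1
    set S' := univ.filter fun e => w' e = b + 1
    have hne : (univ : Finset D.V).Nonempty := by
      rw [← card_pos, card_univ, hG.nV]; omega
    obtain ⟨u0, _, hu0⟩ := Finset.exists_min_image univ (fun u => (incE D u ∩ S).card) hne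
    obtain ⟨a, ha, hau⟩ : ∃ a, a ≤ 2 ∧ ∀ u, a ≤ (incE D u ∩ S).card ∧ (incE D u ∩ S).card ≤ a + 1 := by
      by_cases h3 : (incE D u0 ∩ S).card ≤ 2
      · exact ⟨_, h3, fun u => ⟨hu0 u (mem_univ _), hbal u u0⟩⟩
      · refine ⟨2, le_rfl, fun u => ?_⟩
        have h4 := hu0 u (mem_univ _)
        have h5 := inc_le3 k D hG S u
        omega
    have hl : ∑ u, (phi b (incE D u ∩ S).card : ℤ) ≤ ∑ u, (phi b (incE D u ∩ S').card : ℤ) := by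
      have e1 : ∑ u, (phi b (incE D u ∩ S).card : ℤ) = 2 * k * (phi b a - a * ((phi b (a+1) : ℤ) - phi b a))
          + 2 * S.card * ((phi b (a+1) : ℤ) - phi b a) := by
        rw [← sum_tangent k D hG]
        exact sum_congr rfl fun u _ => (tangent_eq b a _ (hau u).1 (hau u).2).symm
      rw [e1, hc, ← hc', ← sum_tangent k D hG]
      exact sum_le_sum fun u _ => tangent b a _ ha (inc_le3 k D hG S' u)
    exact_mod_cast hl
  refine ⟨partA, fun h2k => ⟨fun hmin => ?_, partA⟩⟩
  obtain ⟨S', hS', a, ha, ha2, hau⟩ := exists_bal k D hG (m % (3 * k)) hmod.le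
  set b := m / (3 * k) with hbdef
  let w' : D.E → ℕ := fun e => if e ∈ S' then b + 1 else b
  have hfil : (univ.filter fun e => w' e = b + 1) = S' := by
    ext e
    by_cases h : e ∈ S' <;> simp [w', h]
  have hstrict : 1 ≤ b ∨ a = 2 := by
    by_cases h : b = 0
    · right
      apply ha2
      have hmm : m % (3 * k) = m := by
        rw [h, mul_zero, zero_add] at hdm
        exact hdm
      rw [hmm]
      exact h2k
    · exact Or.inl (Nat.one_le_iff_ne_zero.2 h)
  have hw' : IsBalancedWeighting D w' m := by
    refine ⟨?_, ?_, ?_⟩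
    · have : ∀ e, w' e = b + if e ∈ S' then 1 else 0 := by
        intro e
        by_cases h : e ∈ S' <;> simp [w', h]
      simp only [this]
      rw [sum_add_distrib, sum_const, card_univ, hG.nE]
      simp only [sum_ite_mem, univ_inter, sum_const, smul_eq_mul, mul_one, hS']
      exact hdm
    · intro e f
      simp only [w']
      split_ifs <;> omega
    · apply zeroAcyclic_of k D hG
      intro u
      by_cases h : b = 0
      · have ha' : a = 2 := by omega
        have h1 := (hau u).1
        have h3 := compl_inc k D hG S' u
        have h4 : (univ.filter fun e => w' e = 0) = S'ᶜ := by
          ext e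
          by_cases h5 : e ∈ S' <;> simp [w', h, h5]
        rw [h4]
        omega
      · have h4 : (univ.filter fun e => w' e = 0) = ∅ := by
          ext e
          by_cases h5 : e ∈ S' <;> simp [w', h, h5]
        rw [h4]
        simp
  have hle := (hd w' hw').1 (hmin w' hw')
  rw [hfil] at hle
  set S := univ.filter fun e => w e = b + 1
  have hle' : ∑ u, (phi b (incE D u ∩ S).card : ℤ) ≤ ∑ u, (phi b (incE D u ∩ S').card : ℤ) := by
    exact_mod_cast hle
  have e1 : ∑ u, (phi b (incE D u ∩ S').card : ℤ) = 2 * k * (phi b a - a * ((phi b (a+1) : ℤ) - phi b a))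
      + 2 * S'.card * ((phi b (a+1) : ℤ) - phi b a) := by
    rw [← sum_tangent k D hG]
    exact sum_congr rfl fun u _ => (tangent_eq b a _ (hau u).1 (hau u).2).symm
  rw [e1, hS', ← hc, ← sum_tangent k D hG] at hle'
  have hall : ∀ u, a ≤ (incE D u ∩ S).card ∧ (incE D u ∩ S).card ≤ a + 1 := by
    by_contra hcon
    push Not at hcon
    obtain ⟨u, hu⟩ := hcon
    apply absurd hle'
    rw [not_le]
    apply sum_lt_sum
    · exact fun u _ => tangent b a _ ha (inc_le3 k D hG S u)
    · refine ⟨u, mem_univ _, tangent_lt b a _ ha (inc_le3 k D hG S u) hstrict ?_⟩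
      rintro ⟨h1, h2⟩
      have := hu h1
      omega
  intro u v
  have h1 := hall u
  have h2 := hall v
  omega
end
end
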